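/- arXiv:2602.01366 — 3 statements merged into one kernel-verified Lean document; each statement's English description precedes it below -/
import Mathlib

section
/- Let 0 < α ≤ 1 and define f : [0,∞) → ℝ by f(x) = E_α(-x) = ∑_{n=0}^∞ (-x)^n / Γ(αn + 1). Then f is completely monotone on (0,∞): f is infinitely differentiable on (0,∞) and (-1)^k f^{(k)}(x) ≥ 0 for every k ≥ 0 and every x > 0. In particular 0 ≤ E_α(-x) ≤ 1 for all x ≥ 0, and x ↦ E_α(-x) is nonincreasing. -/
/-!
Replacing each `Γ(αm + β)` by Euler's product `Real.GammaSeq (αm + β) n` turns the Prabhakar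
function `E^k_{α,β}(z) = ∑ₘ multichoose(k, m) zᵐ / Γ(αm + β)` into a positive multiple of the
`(n+1)`-st Taylor coefficient of `(1 - X)^(αk - β) / ((1 - X)^α - z / n^α)^k`; this is the
Post–Widder inversion of the Laplace transform `s^(αk - β) / (s^α - z)^k`. For `0 < α ≤ 1` and
`z ≤ 0` the series `(1 - X)^α - z` has positive constant term and nonpositive higher coefficients,
so its inverse has nonnegative coefficients, and letting `n → ∞` gives `E^k_{α,β}(z) ≥ 0` whenever
`αk ≤ β`. This condition survives differentiation, since `d/dz E^k_{α,β} = k E^(k+1)_{α,β+α}`, so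
all derivatives of `E_α = E^1_{α,1}` are nonnegative on the negative half-line.
-/

open Asymptotics Filter PowerSeries Topology

section Multichoose

variable {R : Type*} [CommRing R] [BinomialRing R]

theorem succ_mul_multichoose_succ (r : R) (n : ℕ) :
    (n + 1 : R) * Ring.multichoose r (n + 1) = Ring.multichoose r n * (r + n) := by
  have := BinomialRing.toIsAddTorsionFree (R := R)
  refine nsmul_right_injective n.factorial_ne_zero ?_
  have hfact (j : ℕ) : j.factorial * Ring.multichoose r j = (ascPochhammer R j).eval r := by
    rw [← nsmul_eq_mul, Ring.factorial_nsmul_multichoose_eq_ascPochhammer,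
      Polynomial.ascPochhammer_smeval_eq_eval]
  have hsucc := ascPochhammer_succ_eval n r
  rw [← hfact, ← hfact, Nat.factorial_succ] at hsucc
  simp only [nsmul_eq_mul]
  push_cast at hsucc
  linear_combination hsucc

theorem prod_range_add_natCast (r : R) (n : ℕ) :
    ∏ i ∈ Finset.range n, (r + i) = n.factorial * Ring.multichoose r n := by
  induction n with
  | zero => simp
  | succ n ih =>
    rw [Finset.prod_range_succ, ih, mul_assoc, ← succ_mul_multichoose_succ, Nat.factorial_succ]
    push_cast
    ring

/-- The power series `(1 - X) ^ (-r)`. -/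
noncomputable def negBinomialSeries (r : R) : R⟦X⟧ :=
  evalNegHom (binomialSeries R (-r))

theorem coeff_negBinomialSeries (r : R) (n : ℕ) :
    coeff n (negBinomialSeries r) = Ring.multichoose r n := by
  simp [negBinomialSeries, evalNegHom, coeff_rescale, Ring.choose_neg', Units.smul_def,
    Int.negOnePow_def, ← mul_assoc, ← mul_pow]

theorem negBinomialSeries_add (r s : R) :
    negBinomialSeries (r + s) = negBinomialSeries r * negBinomialSeries s := by
  simp only [negBinomialSeries, neg_add, binomialSeries_add, map_mul]

variable [LinearOrder R] [IsStrictOrderedRing R]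

theorem multichoose_nonneg {r : R} (hr : 0 ≤ r) (n : ℕ) : 0 ≤ Ring.multichoose r n := by
  induction n with
  | zero => simp
  | succ n ih =>
    refine nonneg_of_mul_nonneg_right (a := (n + 1 : R)) ?_ (by positivity)
    rw [succ_mul_multichoose_succ]
    positivity

theorem multichoose_neg_succ_nonpos {r : R} (hr0 : 0 ≤ r) (hr1 : r ≤ 1) (n : ℕ) :
    Ring.multichoose (-r) (n + 1) ≤ 0 := by
  induction n with
  | zero => simpa using hr0
  | succ n ih =>
    refine nonpos_of_mul_nonpos_right (a := ((n + 1 : ℕ) + 1 : R)) ?_ (by positivity)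
    rw [succ_mul_multichoose_succ]
    refine mul_nonpos_of_nonpos_of_nonneg ih ?_
    push_cast
    linarith [n.cast_nonneg (α := R)]

end Multichoose

theorem coeff_nonneg_of_coeff_mul_nonneg {R : Type*} [CommRing R] [LinearOrder R]
    [IsStrictOrderedRing R] {φ ψ : R⟦X⟧} (h0 : 0 < coeff 0 φ) (hsucc : ∀ n, coeff (n + 1) φ ≤ 0)
    (hmul : ∀ n, 0 ≤ coeff n (φ * ψ)) (n : ℕ) : 0 ≤ coeff n ψ := by
  induction n using Nat.strong_induction_on with
  | _ n ih =>
    refine nonneg_of_mul_nonneg_right (a := coeff 0 φ) ?_ h0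
    have hn := hmul n
    cases n with
    | zero => simpa [coeff_mul] using hn
    | succ n =>
      have hrest : ∑ p ∈ Finset.HasAntidiagonal.antidiagonal n,
          coeff (p.1 + 1) φ * coeff p.2 ψ ≤ 0 :=
        Finset.sum_nonpos fun p hp ↦ mul_nonpos_of_nonpos_of_nonneg (hsucc _)
          (ih _ (Nat.lt_succ_of_le (Finset.HasAntidiagonal.antidiagonal.snd_le hp)))
      rw [coeff_mul, Finset.Nat.sum_antidiagonal_succ] at hn
      linarith

theorem succ_mul_natMultichoose_succ (k m : ℕ) :
    (m + 1) * k.multichoose (m + 1) = k * (k + 1).multichoose m := by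
  have h := Nat.choose_succ_right_eq (k + m) m
  rw [Nat.add_sub_cancel] at h
  rw [Nat.multichoose_eq, Nat.multichoose_eq, ← add_assoc, Nat.add_sub_cancel, add_right_comm,
    Nat.add_sub_cancel, mul_comm, h, mul_comm]

theorem natMultichoose_le_add_pow (k m : ℕ) : k.multichoose m ≤ (m + k) ^ k :=
  calc k.multichoose m = (k + m - 1).choose m := k.multichoose_eq m
    _ ≤ (k + m).choose m := Nat.choose_le_choose m (Nat.sub_le _ _)
    _ = (m + k).choose k := by rw [add_comm k m, Nat.choose_symm_add]
    _ ≤ (m + k) ^ k := Nat.choose_le_pow _ _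

theorem isBigO_mul_natCast_add_const (a b : ℝ) :
    (fun m : ℕ ↦ a * m + b) =O[atTop] fun m ↦ (m : ℝ) :=
  ((isBigO_refl _ _).const_mul_left a).add
    ((isLittleO_const_id_atTop b).comp_tendsto tendsto_natCast_atTop_atTop).isBigO

theorem isBigO_natMultichoose (k : ℕ) :
    (fun m : ℕ ↦ (k.multichoose m : ℝ)) =O[atTop] fun m ↦ (m : ℝ) ^ k := by
  refine (isBigO_of_le _ fun m ↦ ?_).trans ((isBigO_mul_natCast_add_const 1 k).pow k)
  simpa using mod_cast natMultichoose_le_add_pow k m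

theorem isBigO_multichoose_mul_natCast_add (a b : ℝ) (n : ℕ) :
    (fun m : ℕ ↦ Ring.multichoose (a * m + b) n) =O[atTop] fun m ↦ (m : ℝ) ^ n := by
  induction n with
  | zero => simpa using isBigO_refl (fun _ : ℕ ↦ (1 : ℝ)) atTop
  | succ n ih =>
    have hrec (m : ℕ) : Ring.multichoose (a * m + b) (n + 1) =
        (n + 1 : ℝ)⁻¹ * (Ring.multichoose (a * m + b) n * (a * m + (b + n))) := by
      rw [← add_assoc, ← succ_mul_multichoose_succ, inv_mul_cancel_left₀ (by positivity)]
    simp only [hrec, pow_succ]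
    exact (ih.mul (isBigO_mul_natCast_add_const a (b + n))).const_mul_left _

section ResolventSeries

theorem summable_natMultichoose_mul_pow_mul_multichoose (α β : ℝ) {z : ℝ} (hz : |z| < 1)
    (k n : ℕ) :
    Summable fun m : ℕ ↦ k.multichoose m * z ^ m * Ring.multichoose (α * m + β) n := by
  refine summable_of_isBigO_nat (summable_pow_mul_geometric_of_norm_lt_one (k + n) hz) ?_
  refine (((isBigO_natMultichoose k).mul (isBigO_refl (z ^ ·) atTop)).mul
    (isBigO_multichoose_mul_natCast_add α β n)).congr_right fun m ↦ ?_
  ring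

/-- The power series `(1 - X) ^ (α * k - β) / ((1 - X) ^ α - z) ^ k`, encoded by expanding it as
`∑ₘ multichoose(k, m) * z ^ m * (1 - X) ^ (-(α * m + β))`. The coefficients are meaningful for
`|z| < 1`, where the sums over `m` converge. -/
noncomputable def resolventSeries (α β z : ℝ) (k : ℕ) : ℝ⟦X⟧ :=
  .mk fun n ↦ ∑' m : ℕ, k.multichoose m * z ^ m * Ring.multichoose (α * m + β) n

theorem resolventSeries_zero_right (α β z : ℝ) :
    resolventSeries α β z 0 = negBinomialSeries β := by
  ext n
  rw [resolventSeries, coeff_mk, coeff_negBinomialSeries, tsum_eq_single 0]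
  · simp
  · rintro (_ | m) hm
    · contradiction
    · simp

theorem negBinomialSeries_mul_resolventSeries (α β γ : ℝ) {z : ℝ} (hz : |z| < 1) (k : ℕ) :
    negBinomialSeries γ * resolventSeries α β z k = resolventSeries α (γ + β) z k := by
  ext n
  simp only [resolventSeries, coeff_mul, coeff_mk, coeff_negBinomialSeries, ← tsum_mul_left]
  have hs (p : ℕ × ℕ) := (summable_natMultichoose_mul_pow_mul_multichoose α β hz k p.2).mul_left
    (Ring.multichoose γ p.1)
  rw [← Summable.tsum_finsetSum fun p _ ↦ hs p]
  refine tsum_congr fun m ↦ ?_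
  rw [add_left_comm, ← coeff_negBinomialSeries (γ + _), negBinomialSeries_add, coeff_mul,
    Finset.mul_sum]
  simp only [coeff_negBinomialSeries, mul_left_comm]

theorem resolventSeries_succ_sub_C_mul (α β : ℝ) {z : ℝ} (hz : |z| < 1) (k : ℕ) :
    resolventSeries α β z (k + 1) - C z * resolventSeries α (α + β) z (k + 1) =
      resolventSeries α β z k := by
  ext n
  have hs (β : ℝ) (k : ℕ) := summable_natMultichoose_mul_pow_mul_multichoose α β hz k n
  simp only [resolventSeries, map_sub, coeff_C_mul, coeff_mk]
  rw [sub_eq_iff_eq_add, (hs β (k + 1)).tsum_eq_zero_add, (hs β k).tsum_eq_zero_add,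
    ← tsum_mul_left, add_assoc,
    ← Summable.tsum_add ((summable_nat_add_iff 1).2 (hs β k)) ((hs _ _).mul_left z)]
  simp only [Nat.multichoose_zero_right, Nat.multichoose_succ_succ]
  refine congrArg _ (tsum_congr fun m ↦ ?_)
  have hshift : α * (m + 1 : ℕ) + β = α * m + (α + β) := by
    push_cast
    ring
  rw [hshift]
  push_cast
  ring

theorem negBinomialSeries_sub_C_mul_resolventSeries (α β : ℝ) {z : ℝ} (hz : |z| < 1) (k : ℕ) :
    (negBinomialSeries (-α) - C z) * resolventSeries α (α + β) z (k + 1) =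
      resolventSeries α β z k := by
  rw [sub_mul, negBinomialSeries_mul_resolventSeries _ _ _ hz, neg_add_cancel_left,
    resolventSeries_succ_sub_C_mul α β hz]

theorem coeff_resolventSeries_nonneg {α β z : ℝ} {k : ℕ} (hα0 : 0 ≤ α) (hα1 : α ≤ 1)
    (hαβ : α * k ≤ β) (hz : z ∈ Set.Ioc (-1) 0) (n : ℕ) :
    0 ≤ coeff n (resolventSeries α β z k) := by
  induction k generalizing β n with
  | zero =>
    rw [resolventSeries_zero_right, coeff_negBinomialSeries]
    exact multichoose_nonneg (by simpa using hαβ) n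
  | succ k ih =>
    have hz1 : |z| < 1 := abs_lt.2 ⟨hz.1, hz.2.trans_lt one_pos⟩
    obtain ⟨β, rfl⟩ : ∃ β', β = α + β' := ⟨β - α, by ring⟩
    refine coeff_nonneg_of_coeff_mul_nonneg (φ := negBinomialSeries (-α) - C z) ?_ (fun i ↦ ?_)
      (fun i ↦ ?_) n
    · rw [map_sub, coeff_negBinomialSeries, Ring.multichoose_zero_right, coeff_zero_C]
      linarith [hz.2]
    · rw [map_sub, coeff_negBinomialSeries, coeff_succ_C, sub_zero]
      exact multichoose_neg_succ_nonpos hα0 hα1 i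
    · rw [negBinomialSeries_sub_C_mul_resolventSeries α β hz1]
      refine ih ?_ i
      push_cast at hαβ
      linarith

end ResolventSeries

section GammaSeq

theorem one_add_mul_one_sub_inv_le_rpow {x s : ℝ} (hx : 0 < x) (hs : 0 ≤ s) :
    1 + s * (1 - x⁻¹) ≤ x ^ s :=
  calc 1 + s * (1 - x⁻¹) ≤ 1 + s * Real.log x := by
        gcongr
        exact Real.one_sub_inv_le_log_of_pos hx
    _ ≤ Real.exp (Real.log x * s) := by
        rw [add_comm, mul_comm s]
        exact Real.add_one_le_exp _
    _ = x ^ s := (Real.rpow_def_of_pos hx s).symm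

theorem inv_GammaSeq (s : ℝ) (n : ℕ) :
    (Real.GammaSeq s n)⁻¹ = (n + 1) * Ring.multichoose s (n + 1) / n ^ s := by
  rw [Real.GammaSeq, prod_range_add_natCast, Nat.factorial_succ]
  push_cast
  field_simp

theorem GammaSeq_pos {s : ℝ} (hs : 0 < s) {n : ℕ} (hn : n ≠ 0) : 0 < Real.GammaSeq s n := by
  unfold Real.GammaSeq
  positivity

theorem GammaSeq_succ (s : ℝ) {n : ℕ} (hn : n ≠ 0) :
    Real.GammaSeq s (n + 1) =
      Real.GammaSeq s n * (((n + 1) / n : ℝ) ^ s / (1 + s / (n + 1))) := by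
  have hpow : (n : ℝ) ^ s ≠ 0 := by positivity
  rw [Real.GammaSeq, Real.GammaSeq, Finset.prod_range_succ, Nat.factorial_succ,
    Real.div_rpow (by positivity) (by positivity)]
  push_cast
  field_simp
  ring

theorem monotoneOn_GammaSeq {s : ℝ} (hs : 0 < s) : MonotoneOn (Real.GammaSeq s) (Set.Ici 1) := by
  refine monotoneOn_nat_Ici_of_le_succ fun n hn ↦ ?_
  have hn0 : n ≠ 0 := Nat.one_le_iff_ne_zero.1 hn
  have hratio : 1 + s / (n + 1) ≤ ((n + 1) / n : ℝ) ^ s := by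
    convert! one_add_mul_one_sub_inv_le_rpow (x := (n + 1) / n) (by positivity) hs.le using 2
    field_simp
    ring
  rw [GammaSeq_succ s hn0]
  exact le_mul_of_one_le_right (GammaSeq_pos hs hn0).le ((one_le_div (by positivity)).2 hratio)

theorem GammaSeq_le_Gamma {s : ℝ} (hs : 0 < s) {n : ℕ} (hn : n ≠ 0) :
    Real.GammaSeq s n ≤ Real.Gamma s := by
  have hn1 : 1 ≤ n := Nat.one_le_iff_ne_zero.2 hn
  refine ge_of_tendsto (Real.GammaSeq_tendsto_Gamma s) ?_
  filter_upwards [eventually_ge_atTop n] with i hi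
  exact monotoneOn_GammaSeq hs hn1 (hn1.trans hi) hi

end GammaSeq

theorem norm_div_mul_le_norm_div_mul {x y : ℝ} (hx : 0 < x) (hxy : x ≤ y) (c z : ℝ) :
    ‖c / y * z‖ ≤ ‖c / x * z‖ := by
  simp only [norm_mul, norm_div, Real.norm_of_nonneg hx.le, Real.norm_of_nonneg (hx.le.trans hxy)]
  gcongr

theorem eventually_abs_div_natCast_rpow_lt_one {α : ℝ} (hα : 0 < α) (z : ℝ) :
    ∀ᶠ n : ℕ in atTop, |z / n ^ α| < 1 := by
  have h : Tendsto (fun n : ℕ ↦ |z / (n : ℝ) ^ α|) atTop (𝓝 0) := by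
    simpa using (((tendsto_rpow_atTop hα).comp tendsto_natCast_atTop_atTop).const_div_atTop z).abs
  exact h.eventually_lt_const one_pos

theorem hasDerivAt_tsum_mul_pow {𝕜 : Type*} [RCLike 𝕜] {c : ℕ → 𝕜}
    (hc : ∀ z, Summable fun n ↦ c n * z ^ n) (z : 𝕜) :
    HasDerivAt (fun x ↦ ∑' n, c n * x ^ n) (∑' n : ℕ, (n + 1) * c (n + 1) * z ^ n) z := by
  set p := FormalMultilinearSeries.ofScalars 𝕜 c with hp
  have hradius : p.radius = ⊤ := by
    refine p.radius_eq_top_of_summable_norm fun r ↦ ?_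
    simpa [hp, FormalMultilinearSeries.ofScalars_norm] using (hc (r : ℝ)).norm
  have hf : HasFPowerSeriesOnBall (fun x ↦ ∑' n, c n * x ^ n) p 0 ⊤ := by
    have hsum := p.hasFPowerSeriesOnBall (by simp [hradius])
    rw [hradius] at hsum
    refine hsum.congr fun x _ ↦ ?_
    simp [FormalMultilinearSeries.sum, hp, mul_comm]
  have hderiv : HasSum (fun n : ℕ ↦ (n + 1) * c (n + 1) * z ^ n)
      (deriv (fun x ↦ ∑' n, c n * x ^ n) z) := by
    have hfderiv := hf.fderiv.hasSum (y := z) (by simp)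
    simpa [Function.comp_def, FormalMultilinearSeries.apply_eq_pow_smul_coeff, hp,
      FormalMultilinearSeries.derivSeries_coeff_one, mul_comm, mul_left_comm]
      using (ContinuousLinearMap.apply 𝕜 𝕜 (1 : 𝕜)).hasSum hfderiv
  rw [hderiv.tsum_eq]
  exact (hf.differentiableOn.differentiableAt (by simp)).hasDerivAt

section Prabhakar

/-- Prabhakar's three-parameter Mittag-Leffler function
`E^k_{α,β}(z) = ∑ₘ (k)ₘ / (m! Γ(αm + β)) zᵐ`, for a natural number `k`, so that the rising
factorial enters through `(k)ₘ / m! = multichoose(k, m)`. The Mittag-Leffler function `E_α` is the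
case `β = k = 1`, and the higher `k` and `β` account for its derivatives. -/
noncomputable def prabhakar (α β : ℝ) (k : ℕ) (z : ℝ) : ℝ :=
  ∑' m : ℕ, k.multichoose m / Real.Gamma (α * m + β) * z ^ m

theorem prabhakar_zero_right (α β : ℝ) (k : ℕ) : prabhakar α β k 0 = (Real.Gamma β)⁻¹ := by
  rw [prabhakar, tsum_eq_single 0 fun m hm ↦ by simp [hm]]
  simp

theorem natMultichoose_div_GammaSeq_mul_pow (α β z : ℝ) (k m : ℕ) {n : ℕ} (hn : n ≠ 0) :
    k.multichoose m / Real.GammaSeq (α * m + β) n * z ^ m =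
      (n + 1) / n ^ β *
        (k.multichoose m * (z / n ^ α) ^ m * Ring.multichoose (α * m + β) (n + 1)) := by
  have hn' : (0 : ℝ) < n := by positivity
  rw [div_eq_mul_inv, inv_GammaSeq, Real.rpow_add hn', Real.rpow_mul_natCast hn'.le, div_pow]
  field_simp

theorem summable_natMultichoose_div_GammaSeq_mul_pow (α β : ℝ) {z : ℝ} (k : ℕ) {n : ℕ}
    (hn : n ≠ 0) (hz : |z / n ^ α| < 1) :
    Summable fun m : ℕ ↦ k.multichoose m / Real.GammaSeq (α * m + β) n * z ^ m := by
  simp only [natMultichoose_div_GammaSeq_mul_pow α β z k _ hn]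
  exact (summable_natMultichoose_mul_pow_mul_multichoose α β hz k (n + 1)).mul_left _

theorem tsum_natMultichoose_div_GammaSeq_mul_pow (α β z : ℝ) (k : ℕ) {n : ℕ} (hn : n ≠ 0) :
    ∑' m : ℕ, k.multichoose m / Real.GammaSeq (α * m + β) n * z ^ m =
      (n + 1) / n ^ β * coeff (n + 1) (resolventSeries α β (z / n ^ α) k) := by
  simp only [natMultichoose_div_GammaSeq_mul_pow α β z k _ hn, tsum_mul_left, resolventSeries,
    coeff_mk]

variable {α β : ℝ} (hα : 0 < α) (hβ : 0 < β) (k : ℕ) (z : ℝ)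
include hα hβ

theorem summable_prabhakar :
    Summable fun m : ℕ ↦ k.multichoose m / Real.Gamma (α * m + β) * z ^ m := by
  obtain ⟨n, hz, hn⟩ :=
    ((eventually_abs_div_natCast_rpow_lt_one hα z).and (eventually_ne_atTop 0)).exists
  refine .of_norm_bounded (summable_natMultichoose_div_GammaSeq_mul_pow α β k hn hz).norm fun m ↦ ?_
  have hpos : 0 < α * m + β := by positivity
  exact norm_div_mul_le_norm_div_mul (GammaSeq_pos hpos hn) (GammaSeq_le_Gamma hpos hn) _ _

theorem tendsto_coeff_resolventSeries :
    Tendsto (fun n : ℕ ↦ (n + 1) / n ^ β * coeff (n + 1) (resolventSeries α β (z / n ^ α) k)) atTop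
      (𝓝 (prabhakar α β k z)) := by
  have hpos (m : ℕ) : 0 < α * m + β := by positivity
  obtain ⟨N, hz, hN⟩ :=
    ((eventually_abs_div_natCast_rpow_lt_one hα z).and (eventually_ne_atTop 0)).exists
  have hlim : Tendsto (fun n ↦ ∑' m : ℕ, k.multichoose m / Real.GammaSeq (α * m + β) n * z ^ m)
      atTop (𝓝 (prabhakar α β k z)) := by
    refine tendsto_tsum_of_dominated_convergence
      (summable_natMultichoose_div_GammaSeq_mul_pow α β k hN hz).norm (fun m ↦ ?_) ?_
    · exact (tendsto_const_nhds.div (Real.GammaSeq_tendsto_Gamma _)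
        (Real.Gamma_pos_of_pos (hpos m)).ne').mul_const _
    · filter_upwards [eventually_ge_atTop N] with n hn m
      have hN1 : 1 ≤ N := Nat.one_le_iff_ne_zero.2 hN
      exact norm_div_mul_le_norm_div_mul (GammaSeq_pos (hpos m) hN)
        (monotoneOn_GammaSeq (hpos m) hN1 (hN1.trans hn) hn) _ _
  refine hlim.congr' ?_
  filter_upwards [eventually_ne_atTop 0] with n hn
  exact tsum_natMultichoose_div_GammaSeq_mul_pow α β z k hn

theorem hasDerivAt_prabhakar :
    HasDerivAt (prabhakar α β k) (k * prabhakar α (β + α) (k + 1) z) z := by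
  convert! hasDerivAt_tsum_mul_pow (summable_prabhakar hα hβ k) z using 1
  rw [prabhakar, ← tsum_mul_left]
  refine tsum_congr fun m ↦ ?_
  have hcoeff : (m + 1 : ℝ) * k.multichoose (m + 1) = k * (k + 1).multichoose m :=
    mod_cast succ_mul_natMultichoose_succ k m
  push_cast
  rw [← mul_assoc, ← mul_div_assoc, ← mul_div_assoc, hcoeff]
  ring_nf

theorem iteratedDeriv_prabhakar (j : ℕ) :
    iteratedDeriv j (prabhakar α β k) =
      fun z ↦ k.ascFactorial j * prabhakar α (β + j * α) (k + j) z := by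
  induction j with
  | zero => simp
  | succ j ih =>
    ext z
    have hβj : 0 < β + j * α := by positivity
    rw [iteratedDeriv_succ, ih, ((hasDerivAt_prabhakar hα hβj (k + j) z).const_mul _).deriv,
      Nat.ascFactorial_succ]
    push_cast
    ring_nf

theorem contDiff_prabhakar : ContDiff ℝ (⊤ : ℕ∞) (prabhakar α β k) := by
  refine contDiff_of_differentiable_iteratedDeriv fun j _ ↦ ?_
  have hβj : 0 < β + j * α := by positivity
  rw [iteratedDeriv_prabhakar hα hβ]
  exact fun z ↦ (hasDerivAt_prabhakar hα hβj (k + j) z).differentiableAt.const_mul _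

variable {k z} (hα1 : α ≤ 1) (hαβ : α * k ≤ β)
include hα1 hαβ

theorem prabhakar_nonneg (hz : z ≤ 0) : 0 ≤ prabhakar α β k z := by
  refine ge_of_tendsto (tendsto_coeff_resolventSeries hα hβ k z) ?_
  filter_upwards [eventually_abs_div_natCast_rpow_lt_one hα z] with n hn
  have hzn : z / n ^ α ∈ Set.Ioc (-1) 0 :=
    ⟨(abs_lt.1 hn).1, div_nonpos_of_nonpos_of_nonneg hz (by positivity)⟩
  exact mul_nonneg (by positivity) (coeff_resolventSeries_nonneg hα.le hα1 hαβ hzn _)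

theorem neg_one_pow_mul_iteratedDeriv_prabhakar_neg_nonneg (j : ℕ) {x : ℝ} (hx : 0 ≤ x) :
    0 ≤ (-1 : ℝ) ^ j * iteratedDeriv j (fun x ↦ prabhakar α β k (-x)) x := by
  have hnonneg : 0 ≤ prabhakar α (β + j * α) (k + j) (-x) :=
    prabhakar_nonneg hα (by positivity) hα1 (by push_cast; linarith) (neg_nonpos.2 hx)
  rw [iteratedDeriv_comp_neg, iteratedDeriv_prabhakar hα hβ, smul_eq_mul, ← mul_assoc, ← mul_pow]
  simpa using mul_nonneg (by positivity) hnonneg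

theorem antitoneOn_prabhakar_neg : AntitoneOn (fun x ↦ prabhakar α β k (-x)) (Set.Ici 0) := by
  have hsmooth := (contDiff_prabhakar hα hβ k).comp contDiff_neg
  refine antitoneOn_of_deriv_nonpos (convex_Ici 0) hsmooth.continuous.continuousOn
    (hsmooth.differentiable (by simp)).differentiableOn fun x hx ↦ ?_
  simpa [iteratedDeriv_one] using neg_one_pow_mul_iteratedDeriv_prabhakar_neg_nonneg hα hβ hα1 hαβ
    1 (interior_subset hx)

end Prabhakar

theorem mittagLeffler_completely_monotone_general {α β : ℝ} {k : ℕ} (hα0 : 0 < α) (hα1 : α ≤ 1)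
    (hβ : 0 < β) (hαβ : α * k ≤ β) :
    ContDiff ℝ (⊤ : ℕ∞) (fun x ↦ prabhakar α β k (-x)) ∧
      (∀ (j : ℕ) (x : ℝ), 0 ≤ x →
        0 ≤ (-1 : ℝ) ^ j * iteratedDeriv j (fun x ↦ prabhakar α β k (-x)) x) ∧
      (∀ x : ℝ, 0 ≤ x → 0 ≤ prabhakar α β k (-x) ∧ prabhakar α β k (-x) ≤ (Real.Gamma β)⁻¹) ∧
      AntitoneOn (fun x ↦ prabhakar α β k (-x)) (Set.Ici 0) := by
  have hanti := antitoneOn_prabhakar_neg hα0 hβ hα1 hαβ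
  refine ⟨(contDiff_prabhakar hα0 hβ k).comp contDiff_neg, fun j x hx ↦
    neg_one_pow_mul_iteratedDeriv_prabhakar_neg_nonneg hα0 hβ hα1 hαβ j hx, fun x hx ↦
    ⟨prabhakar_nonneg hα0 hβ hα1 hαβ (neg_nonpos.2 hx), ?_⟩, hanti⟩
  simpa only [neg_zero, prabhakar_zero_right] using hanti Set.self_mem_Ici hx hx

/-- The Mittag–Leffler relaxation kernel `f(x) = E_α(-x)`, `0 < α ≤ 1`, is
completely monotone on `(0,∞)`; in particular `0 ≤ E_α(-x) ≤ 1` for `x ≥ 0`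
and `x ↦ E_α(-x)` is nonincreasing on `[0,∞)`. -/
theorem mittagLeffler_completely_monotone (α : ℝ) (hα0 : 0 < α) (hα1 : α ≤ 1)
    (f : ℝ → ℝ)
    (hf : ∀ x : ℝ, f x = ∑' n : ℕ, (-x) ^ n / Real.Gamma (α * n + 1)) :
    ContDiffOn ℝ (⊤ : ℕ∞) f (Set.Ioi 0) ∧
      (∀ (k : ℕ) (x : ℝ), 0 < x → 0 ≤ (-1 : ℝ) ^ k * iteratedDeriv k f x) ∧
      (∀ x : ℝ, 0 ≤ x → 0 ≤ f x ∧ f x ≤ 1) ∧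
      AntitoneOn f (Set.Ici 0) := by
  obtain rfl : f = fun x ↦ prabhakar α 1 1 (-x) := by
    ext x
    simp only [hf, prabhakar, Nat.multichoose_one, Nat.cast_one, one_div_mul_eq_div]
  obtain ⟨hsmooth, hsign, hbounds, hanti⟩ :=
    mittagLeffler_completely_monotone_general (k := 1) hα0 hα1 one_pos (by simpa using hα1)
  exact ⟨hsmooth.contDiffOn, fun k x hx ↦ hsign k x hx.le, by simpa using hbounds, hanti⟩
end

section
/- Let 0 < α < 1 and γ ≥ 0 with α + γ ≤ 1, and let c_n be the Kilbas–Saigo coefficients with parameters (a, m, l) = (α, 1 + γ/α, γ/α). Define g(x) = ∑_{n=0}^∞ c_n (-x)^n for x ≥ 0, i.e. g(x) = E_{α, 1+γ/α, γ/α}(-x). Then g is completely monotone on (0,∞): g is infinitely differentiable on (0,∞) and (-1)^k g^{(k)}(x) ≥ 0 for every k ≥ 0 and every x > 0. In particular 0 ≤ g(x) ≤ 1 for all x ≥ 0. -/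
/-- Kilbas–Saigo coefficients: `c 0 = 1` and
`c n = ∏_{k=0}^{n-1} Γ(1 + a(km + l)) / Γ(1 + a(km + l + 1))`. -/
noncomputable def ksCoeff (a m l : ℝ) (n : ℕ) : ℝ :=
  ∏ k ∈ Finset.range n,
    Real.Gamma (1 + a * (k * m + l)) / Real.Gamma (1 + a * (k * m + l + 1))

/-!
For `l = m - 1` one has `n! * c n = (a * m)⁻¹ ^ n * ∏ j < n, Γ(y j + 1 - a) / Γ(y j)` with
`y j = (j + 1) * a * m`. By Euler's limit formula each gamma quotient `Γ(y + β) / Γ(y)` is the limit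
of `N ^ β * ∏ i ≤ N, (y + i) / (y + β + i)`. For fixed `i`, the factors `(y j + i) / (y j + β + i)`
multiply, as `j` runs over `0, …, n - 1`, to the `n`-th moment of a beta distribution.

Multiplying `b n` by the `n`-th moment of a measure on `[0, ∞)` turns `∑ b n * (-x) ^ n / n!` into a
mixture of its dilations, so complete monotonicity survives; it also survives limits of sequences
with a common majorant. Hence `E_{a,m,m-1}(-x)` is obtained from `exp (-x)` by such operations, the
majorant being `Γ(y + β) / Γ(y) ≤ y ^ β`, which already holds for Euler's approximants.
-/

open Filter Finset MeasureTheory ProbabilityTheory Topology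
open scoped Nat

/-! ### Alternating exponential generating functions -/

/-- The alternating exponential generating function `∑ b n * (-x) ^ n / n!` of `b`; when `b n` are
the moments of a measure, this is its Laplace transform. Its value is junk where the series
diverges, see `HasEntireEgf`. -/
noncomputable def altEgf (b : ℕ → ℝ) (x : ℝ) : ℝ :=
  ∑' n : ℕ, b n / n ! * (-x) ^ n

/-- The exponential generating function of `b` converges on the whole real line (equivalently,
converges absolutely there). -/
def HasEntireEgf (b : ℕ → ℝ) : Prop :=
  ∀ x : ℝ, Summable fun n : ℕ => b n / n ! * x ^ n

lemma altEgf_zero (b : ℕ → ℝ) : altEgf b 0 = b 0 := by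
  rw [altEgf, tsum_eq_single 0 fun n hn => by simp [hn]]
  simp

lemma altEgf_shift_pow_mul (b : ℕ → ℝ) (s : ℝ) (k : ℕ) (x : ℝ) :
    altEgf (fun n => s ^ (n + k) * b (n + k)) x = s ^ k * altEgf (fun n => b (n + k)) (s * x) := by
  rw [altEgf, altEgf, ← tsum_mul_left]
  refine tsum_congr fun n => ?_
  rw [← mul_neg, mul_pow, pow_add]
  ring

namespace HasEntireEgf

variable {b c : ℕ → ℝ}

lemma of_abs_le (hb : HasEntireEgf b) (hcb : ∀ n, |c n| ≤ |b n|) : HasEntireEgf c := fun x => by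
  refine Summable.of_norm_bounded (hb x).norm fun n => ?_
  simp only [norm_mul, norm_div, Real.norm_eq_abs]
  gcongr ?_ / _ * _
  exact hcb n

lemma pow_mul (hb : HasEntireEgf b) (s : ℝ) : HasEntireEgf fun n => s ^ n * b n := fun x =>
  (hb (s * x)).congr fun n => by rw [mul_pow]; ring

lemma shift_one (hb : HasEntireEgf b) : HasEntireEgf fun n => b (n + 1) := fun x => by
  have hdominating := (summable_nat_add_iff 1).2 (hb (2 * (|x| + 1))).norm
  refine Summable.of_norm_bounded hdominating fun n => ?_
  have hn : ((n + 1 : ℕ) : ℝ) ≤ 2 ^ (n + 1) := by exact_mod_cast Nat.lt_two_pow_self.le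
  have hx : |x| ^ n ≤ (|x| + 1) ^ (n + 1) := calc
    |x| ^ n ≤ (|x| + 1) ^ n := by gcongr; linarith
    _ ≤ (|x| + 1) ^ (n + 1) := pow_le_pow_right₀ (by linarith [abs_nonneg x]) n.le_succ
  calc ‖b (n + 1) / n ! * x ^ n‖
      = |b (n + 1)| / (n + 1)! * (((n + 1 : ℕ) : ℝ) * |x| ^ n) := by
        rw [Nat.factorial_succ, norm_mul, norm_div, norm_pow]
        simp only [Real.norm_eq_abs, Nat.abs_cast]
        push_cast
        field_simp
    _ ≤ |b (n + 1)| / (n + 1)! * (2 ^ (n + 1) * (|x| + 1) ^ (n + 1)) := by gcongr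
    _ = ‖b (n + 1) / (n + 1)! * (2 * (|x| + 1)) ^ (n + 1)‖ := by
        rw [norm_mul, norm_div, norm_pow, ← mul_pow]
        simp [abs_of_nonneg (by positivity : 0 ≤ |x| + 1)]

lemma shift (hb : HasEntireEgf b) (k : ℕ) : HasEntireEgf fun n => b (n + k) := by
  induction k with
  | zero => exact hb
  | succ k ih => simpa only [add_right_comm _ 1 k, ← add_assoc] using ih.shift_one

lemma altEgf_eq_add_tsum (hb : HasEntireEgf b) (x : ℝ) :
    altEgf b x = b 0 + ∑' n : ℕ, b (n + 1) / (n + 1)! * (-x) ^ (n + 1) := by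
  rw [altEgf, (hb (-x)).tsum_eq_zero_add]
  simp

lemma hasDerivAt_altEgf (hb : HasEntireEgf b) (x : ℝ) :
    HasDerivAt (altEgf b) (-altEgf (fun n => b (n + 1)) x) x := by
  have hterm (n : ℕ) (y : ℝ) : HasDerivAt (fun y => b (n + 1) / (n + 1)! * (-y) ^ (n + 1))
      (-(b (n + 1) / n ! * (-y) ^ n)) y := by
    refine ((hasDerivAt_neg y).pow (n + 1) |>.const_mul _).congr_deriv ?_
    rw [Nat.factorial_succ, Nat.add_sub_cancel]
    push_cast
    field_simp
  have hbound (n : ℕ) (y : ℝ) (hy : y ∈ Metric.ball (0 : ℝ) (|x| + 1)) :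
      ‖-(b (n + 1) / n ! * (-y) ^ n)‖ ≤ ‖b (n + 1) / n ! * (|x| + 1) ^ n‖ := by
    have hy' : |y| ≤ |(|x| + 1)| := (mem_ball_zero_iff.1 hy).le.trans (le_abs_self _)
    simp only [norm_neg, norm_mul, norm_pow, Real.norm_eq_abs y, Real.norm_eq_abs (|x| + 1)]
    gcongr
  have hseries := hasDerivAt_tsum_of_isPreconnected (hb.shift_one (|x| + 1)).norm
    Metric.isOpen_ball (convex_ball _ _).isPreconnected (fun n y _ => hterm n y) hbound
    (Metric.mem_ball_self (by positivity)) (by simp)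
    (mem_ball_zero_iff.2 (lt_add_one |x|))
  rw [funext hb.altEgf_eq_add_tsum, altEgf, ← tsum_neg]
  exact hseries.const_add (b 0)

lemma iteratedDeriv_altEgf (hb : HasEntireEgf b) (k : ℕ) :
    iteratedDeriv k (altEgf b) = fun x => (-1) ^ k * altEgf (fun n => b (n + k)) x := by
  induction k with
  | zero => simp
  | succ k ih =>
    ext x
    rw [iteratedDeriv_succ, ih, (((hb.shift k).hasDerivAt_altEgf x).const_mul _).deriv]
    simp only [add_right_comm _ 1 k, add_assoc]
    ring

lemma contDiff_altEgf (hb : HasEntireEgf b) : ContDiff ℝ (⊤ : ℕ∞) (altEgf b) := by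
  refine contDiff_of_differentiable_iteratedDeriv fun k _ => ?_
  rw [hb.iteratedDeriv_altEgf]
  exact fun x => (((hb.shift k).hasDerivAt_altEgf x).const_mul _).differentiableAt

end HasEntireEgf

lemma hasEntireEgf_prod_of_tendsto {u : ℕ → ℝ}
    (hu : Tendsto (fun n : ℕ => u n / (n + 1)) atTop (𝓝 0)) :
    HasEntireEgf fun n => ∏ j ∈ range n, u j := fun x => by
  have hratio : Tendsto (fun n : ℕ => ‖u n / (n + 1) * x‖) atTop (𝓝 0) := by
    simpa using (hu.mul_const x).norm
  refine summable_of_ratio_norm_eventually_le one_half_lt_one ?_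
  filter_upwards [hratio.eventually_le_const (one_half_pos (α := ℝ))] with n hn
  calc ‖(∏ j ∈ range (n + 1), u j) / (n + 1)! * x ^ (n + 1)‖
      = ‖u n / (n + 1) * x‖ * ‖(∏ j ∈ range n, u j) / n ! * x ^ n‖ := by
        rw [← norm_mul, prod_range_succ, Nat.factorial_succ, pow_succ]
        push_cast
        congr 1
        field_simp
    _ ≤ 1 / 2 * ‖(∏ j ∈ range n, u j) / n ! * x ^ n‖ := by gcongr

/-! ### Complete monotonicity of the generating function -/

/-- The alternating exponential generating function of `b` is entire and completely monotone on
`[0, ∞)`. Since differentiating `altEgf b` shifts `b` and changes the sign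
(`HasEntireEgf.iteratedDeriv_altEgf`), the sign condition is imposed on the shifts of `b`. -/
structure HasCMEgf (b : ℕ → ℝ) : Prop where
  hasEntireEgf : HasEntireEgf b
  altEgf_shift_nonneg (k : ℕ) {x : ℝ} (hx : 0 ≤ x) : 0 ≤ altEgf (fun n => b (n + k)) x

lemma hasCMEgf_one : HasCMEgf fun _ => 1 where
  hasEntireEgf x := (Real.summable_pow_div_factorial x).congr fun n => by ring
  altEgf_shift_nonneg _ x _ := by
    have hexp : altEgf (fun _ => 1) x = Real.exp (-x) := by
      rw [Real.exp_eq_exp_ℝ, NormedSpace.exp_eq_tsum_div, altEgf]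
      exact tsum_congr fun n => by ring
    exact hexp ▸ (Real.exp_pos _).le

namespace HasCMEgf

variable {b c : ℕ → ℝ}

lemma neg_one_pow_mul_iteratedDeriv_nonneg (hb : HasCMEgf b) (k : ℕ) {x : ℝ} (hx : 0 ≤ x) :
    0 ≤ (-1) ^ k * iteratedDeriv k (altEgf b) x := by
  rw [hb.hasEntireEgf.iteratedDeriv_altEgf, ← mul_assoc, ← mul_pow]
  simpa using hb.altEgf_shift_nonneg k hx

lemma altEgf_nonneg (hb : HasCMEgf b) {x : ℝ} (hx : 0 ≤ x) : 0 ≤ altEgf b x :=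
  hb.altEgf_shift_nonneg 0 hx

lemma antitoneOn_altEgf (hb : HasCMEgf b) : AntitoneOn (altEgf b) (Set.Ici 0) := by
  have hderiv := hb.hasEntireEgf.hasDerivAt_altEgf
  refine antitoneOn_of_deriv_nonpos (convex_Ici 0)
    hb.hasEntireEgf.contDiff_altEgf.continuous.continuousOn
    (fun y _ => (hderiv y).differentiableAt.differentiableWithinAt) fun y hy => ?_
  rw [(hderiv y).deriv]
  exact neg_nonpos.2 (hb.altEgf_shift_nonneg 1 (interior_subset hy))

lemma altEgf_le (hb : HasCMEgf b) {x : ℝ} (hx : 0 ≤ x) : altEgf b x ≤ b 0 :=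
  (hb.antitoneOn_altEgf Set.self_mem_Ici hx hx).trans_eq (altEgf_zero b)

lemma pow_mul (hb : HasCMEgf b) {s : ℝ} (hs : 0 ≤ s) : HasCMEgf fun n => s ^ n * b n where
  hasEntireEgf := hb.hasEntireEgf.pow_mul s
  altEgf_shift_nonneg k x hx := by
    rw [altEgf_shift_pow_mul]
    exact mul_nonneg (pow_nonneg hs k) (hb.altEgf_shift_nonneg k (mul_nonneg hs hx))

lemma of_tendsto_of_abs_le {ι : Type*} {l : Filter ι} [l.NeBot] {f : ι → ℕ → ℝ} {B : ℕ → ℝ}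
    (hf : ∀ i, HasCMEgf (f i)) (hB : HasEntireEgf B) (hfB : ∀ i n, |f i n| ≤ |B n|)
    (hlim : ∀ n, Tendsto (fun i => f i n) l (𝓝 (c n))) : HasCMEgf c where
  hasEntireEgf := hB.of_abs_le fun n => le_of_tendsto' (hlim n).abs fun i => hfB i n
  altEgf_shift_nonneg k x hx := by
    have htendsto : Tendsto (fun i => altEgf (fun n => f i (n + k)) x) l
        (𝓝 (altEgf (fun n => c (n + k)) x)) := by
      refine tendsto_tsum_of_dominated_convergence (hB.shift k (-x)).norm
        (fun n => ((hlim (n + k)).div_const _).mul_const _) (.of_forall fun i n => ?_)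
      simp only [norm_mul, norm_div, Real.norm_eq_abs]
      gcongr ?_ / _ * _
      exact hfB i (n + k)
    exact ge_of_tendsto' htendsto fun i => (hf i).altEgf_shift_nonneg k hx

end HasCMEgf

/-! ### Multiplication by moments -/

lemma altEgf_shift_mul_integral_pow {b : ℕ → ℝ} {μ : Measure ℝ}
    (hμ : ∀ᵐ t ∂μ, 0 ≤ t) (hintegrable : ∀ n : ℕ, Integrable (fun t => t ^ n) μ)
    (hb : HasEntireEgf fun n => b n * ∫ t, t ^ n ∂μ) (k : ℕ) (x : ℝ) :
    altEgf (fun n => b (n + k) * ∫ t, t ^ (n + k) ∂μ) x =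
      ∫ t, t ^ k * altEgf (fun n => b (n + k)) (t * x) ∂μ := by
  have hnorm (n : ℕ) : ∫ t, ‖b (n + k) / n ! * (-x) ^ n * t ^ (n + k)‖ ∂μ =
      ‖b (n + k) * (∫ t, t ^ (n + k) ∂μ) / n ! * (-x) ^ n‖ := by
    have habs : ∫ t, ‖t ^ (n + k)‖ ∂μ = ‖∫ t, t ^ (n + k) ∂μ‖ := by
      have hpos : ∀ᵐ t ∂μ, 0 ≤ t ^ (n + k) := hμ.mono fun t ht => pow_nonneg ht _
      rw [Real.norm_of_nonneg (integral_nonneg_of_ae hpos)]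
      exact integral_congr_ae (hpos.mono fun t ht => Real.norm_of_nonneg ht)
    simp_rw [norm_mul _ (_ ^ (n + k)), integral_const_mul, habs, ← norm_mul]
    congr 1
    ring
  have hsum := hasSum_integral_of_summable_integral_norm (μ := μ)
    (fun n => (hintegrable (n + k)).const_mul (b (n + k) / n ! * (-x) ^ n))
    ((hb.shift k (-x)).norm.congr fun n => (hnorm n).symm)
  calc altEgf (fun n => b (n + k) * ∫ t, t ^ (n + k) ∂μ) x
      = ∑' n : ℕ, ∫ t, b (n + k) / n ! * (-x) ^ n * t ^ (n + k) ∂μ :=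
        tsum_congr fun n => by rw [integral_const_mul]; ring
    _ = ∫ t, ∑' n : ℕ, b (n + k) / n ! * (-x) ^ n * t ^ (n + k) ∂μ := hsum.tsum_eq
    _ = ∫ t, t ^ k * altEgf (fun n => b (n + k)) (t * x) ∂μ := by
        refine integral_congr_ae (.of_forall fun t => ?_)
        simp only [← altEgf_shift_pow_mul]
        exact tsum_congr fun n => by ring

lemma HasCMEgf.mul_integral_pow {b : ℕ → ℝ} (hb : HasCMEgf b) {μ : Measure ℝ}
    (hμ : ∀ᵐ t ∂μ, 0 ≤ t) (hintegrable : ∀ n : ℕ, Integrable (fun t => t ^ n) μ)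
    (hentire : HasEntireEgf fun n => b n * ∫ t, t ^ n ∂μ) :
    HasCMEgf fun n => b n * ∫ t, t ^ n ∂μ where
  hasEntireEgf := hentire
  altEgf_shift_nonneg k x hx := by
    rw [altEgf_shift_mul_integral_pow hμ hintegrable hentire]
    refine integral_nonneg_of_ae (hμ.mono fun t ht => ?_)
    exact mul_nonneg (pow_nonneg ht k) (hb.altEgf_shift_nonneg k (mul_nonneg ht hx))

/-! ### Moments of the beta distribution -/

section Beta

variable {p d : ℝ}

lemma measurable_betaPDF (p d : ℝ) : Measurable (betaPDF p d) :=
  (measurable_betaPDFReal p d).ennreal_ofReal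

lemma ae_betaMeasure_mem_Ioo (p d : ℝ) : ∀ᵐ t ∂betaMeasure p d, t ∈ Set.Ioo (0 : ℝ) 1 := by
  rw [betaMeasure, ae_withDensity_iff (measurable_betaPDF p d)]
  refine .of_forall fun t ht => ⟨?_, ?_⟩
  · by_contra! h
    exact ht (betaPDF_eq_zero_of_nonpos h)
  · by_contra! h
    exact ht (betaPDF_eq_zero_of_one_le h)

lemma integrable_pow_betaMeasure (hp : 0 < p) (hd : 0 < d) (n : ℕ) :
    Integrable (fun t => t ^ n) (betaMeasure p d) := by
  have := isProbabilityMeasureBeta hp hd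
  refine .of_bound (by fun_prop) 1 ((ae_betaMeasure_mem_Ioo p d).mono fun t ht => ?_)
  rw [Real.norm_of_nonneg (pow_nonneg ht.1.le n)]
  exact pow_le_one₀ ht.1.le ht.2.le

lemma betaPDFReal_nonneg (hp : 0 < p) (hd : 0 < d) (t : ℝ) : 0 ≤ betaPDFReal p d t := by
  by_cases ht : 0 < t ∧ t < 1
  · exact (betaPDFReal_pos ht.1 ht.2 hp hd).le
  · rw [betaPDFReal, if_neg ht]

lemma integral_betaPDFReal (hp : 0 < p) (hd : 0 < d) : ∫ t, betaPDFReal p d t = 1 := by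
  rw [integral_eq_lintegral_of_nonneg_ae (.of_forall (betaPDFReal_nonneg hp hd)) (by fun_prop)]
  exact congrArg ENNReal.toReal (lintegral_betaPDF_eq_one hp hd)

lemma betaPDFReal_mul_pow (hp : 0 < p) (hd : 0 < d) (n : ℕ) (t : ℝ) :
    betaPDFReal p d t * t ^ n = beta (p + n) d / beta p d * betaPDFReal (p + n) d t := by
  have hpn : 0 < beta (p + n) d := beta_pos (by positivity) hd
  rw [betaPDFReal, betaPDFReal]
  split_ifs with ht
  · rw [show p + n - 1 = p - 1 + n by ring, Real.rpow_add_natCast ht.1.ne']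
    field_simp
  · simp

lemma beta_add_one (hp : 0 < p) (hd : 0 < d) : beta (p + 1) d = beta p d * (p / (p + d)) := by
  have hpd : 0 < p + d := add_pos hp hd
  have := Real.Gamma_pos_of_pos hpd
  rw [beta, beta, add_right_comm, Real.Gamma_add_one hp.ne', Real.Gamma_add_one hpd.ne']
  field_simp

lemma beta_add_natCast (hp : 0 < p) (hd : 0 < d) (n : ℕ) :
    beta (p + n) d = beta p d * ∏ j ∈ range n, (p + j) / (p + d + j) := by
  induction n with
  | zero => simp
  | succ n ih =>
    rw [Nat.cast_succ, ← add_assoc, beta_add_one (by positivity) hd, ih, prod_range_succ,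
      add_right_comm p d, mul_assoc]

lemma integral_pow_betaMeasure (hp : 0 < p) (hd : 0 < d) (n : ℕ) :
    ∫ t, t ^ n ∂betaMeasure p d = ∏ j ∈ range n, (p + j) / (p + d + j) := by
  rw [betaMeasure, integral_withDensity_eq_integral_toReal_smul (measurable_betaPDF p d)
    (.of_forall fun _ => ENNReal.ofReal_lt_top)]
  calc ∫ t, (betaPDF p d t).toReal • t ^ n
      = ∫ t, beta (p + n) d / beta p d * betaPDFReal (p + n) d t := by
        refine integral_congr_ae (.of_forall fun t => ?_)
        simp only [betaPDF, ENNReal.toReal_ofReal (betaPDFReal_nonneg hp hd t), smul_eq_mul,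
          betaPDFReal_mul_pow hp hd]
    _ = beta (p + n) d / beta p d := by
        rw [integral_const_mul, integral_betaPDFReal (by positivity) hd, mul_one]
    _ = ∏ j ∈ range n, (p + j) / (p + d + j) := by
        rw [beta_add_natCast hp hd, mul_div_cancel_left₀ _ (beta_pos hp hd).ne']

end Beta

namespace HasCMEgf

variable {b : ℕ → ℝ} {p δ β : ℝ}

lemma mul_prod_div_add (hb : HasCMEgf b) (hp : 0 < p) {d : ℝ} (hd : 0 ≤ d) :
    HasCMEgf fun n => b n * ∏ j ∈ range n, (p + j) / (p + d + j) := by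
  obtain rfl | hd := hd.eq_or_lt
  · convert hb using 2 with n
    rw [prod_eq_one fun j _ => ?_, mul_one]
    rw [add_zero, div_self (by positivity)]
  · simp_rw [← integral_pow_betaMeasure hp hd]
    refine hb.mul_integral_pow ((ae_betaMeasure_mem_Ioo p d).mono fun t ht => ht.1.le)
      (integrable_pow_betaMeasure hp hd) (hb.hasEntireEgf.of_abs_le fun n => ?_)
    rw [integral_pow_betaMeasure hp hd, abs_mul, abs_prod]
    refine mul_le_of_le_one_right (abs_nonneg _) (prod_le_one (fun _ _ => abs_nonneg _) ?_)
    intro j _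
    rw [abs_of_pos (by positivity), div_le_one (by positivity)]
    linarith

lemma mul_prod_div_add_mul (hb : HasCMEgf b) (hp : 0 < p) (hδ : 0 < δ) (hβ : 0 ≤ β) :
    HasCMEgf fun n => b n * ∏ j ∈ range n, (p + j * δ) / (p + j * δ + β) := by
  convert hb.mul_prod_div_add (div_pos hp hδ) (div_nonneg hβ hδ.le) using 4 with n j
  field_simp
  ring

end HasCMEgf

lemma hasCMEgf_prod_mul_prod {p δ β s : ℝ} (hs : 0 ≤ s) (hp : 0 < p) (hδ : 0 < δ) (hβ : 0 ≤ β)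
    (M : ℕ) :
    HasCMEgf fun n =>
      ∏ j ∈ range n, (s * ∏ i ∈ range M, (p + j * δ + i) / (p + j * δ + β + i)) := by
  induction M with
  | zero => simpa using hasCMEgf_one.pow_mul hs
  | succ M ih =>
    convert ih.mul_prod_div_add_mul (p := p + M) (by positivity) hδ hβ using 2 with n
    rw [← prod_mul_distrib]
    refine prod_congr rfl fun j _ => ?_
    rw [prod_range_succ, mul_assoc]
    ring

/-! ### Euler's approximation of `Γ(y + β) / Γ(y)` -/

section Gamma

variable {y β : ℝ}

lemma tendsto_rpow_mul_prod_div_add (hy : 0 < y) (hβ : 0 ≤ β) :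
    Tendsto (fun N : ℕ => (N : ℝ) ^ β * ∏ i ∈ range (N + 1), (y + i) / (y + β + i))
      atTop (𝓝 (Real.Gamma (y + β) / Real.Gamma y)) := by
  refine ((Real.GammaSeq_tendsto_Gamma (y + β)).div (Real.GammaSeq_tendsto_Gamma y)
    (Real.Gamma_pos_of_pos hy).ne').congr' ?_
  filter_upwards [eventually_gt_atTop 0] with N hN
  have hN' : (0 : ℝ) < N := Nat.cast_pos.2 hN
  have : 0 < ∏ i ∈ range (N + 1), (y + i) := prod_pos fun i _ => by positivity
  have : 0 < ∏ i ∈ range (N + 1), (y + β + i) := prod_pos fun i _ => by positivity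
  rw [Pi.div_apply, Real.GammaSeq, Real.GammaSeq, Real.rpow_add hN', prod_div_distrib]
  field_simp

lemma div_add_le_rpow_div_add_one (hy : 0 < y) (hβ0 : 0 ≤ β) (hβ1 : β ≤ 1) :
    y / (y + β) ≤ (y / (y + 1)) ^ β := by
  have hbernoulli : (1 + y⁻¹) ^ β ≤ 1 + β * y⁻¹ :=
    rpow_one_add_le_one_add_mul_self (by linarith [inv_pos.2 hy]) hβ0 hβ1
  calc y / (y + β) = (1 + β * y⁻¹)⁻¹ := by field_simp
    _ ≤ ((1 + y⁻¹) ^ β)⁻¹ := inv_anti₀ (by positivity) hbernoulli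
    _ = (y / (y + 1)) ^ β := by
        rw [← Real.inv_rpow (by positivity)]
        congr 1
        field_simp

lemma prod_div_add_le_rpow (hy : 0 < y) (hβ0 : 0 ≤ β) (hβ1 : β ≤ 1) (M : ℕ) :
    ∏ i ∈ range M, (y + i) / (y + β + i) ≤ (y / (y + M)) ^ β := by
  induction M with
  | zero => simp [hy.ne']
  | succ M ih =>
    have hyM : 0 < y + M := by positivity
    calc ∏ i ∈ range (M + 1), (y + i) / (y + β + i)
        = (∏ i ∈ range M, (y + i) / (y + β + i)) * ((y + M) / (y + M + β)) := by
          rw [prod_range_succ, add_right_comm y β]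
      _ ≤ (y / (y + M)) ^ β * ((y + M) / (y + M + 1)) ^ β := by
          gcongr
          exact div_add_le_rpow_div_add_one hyM hβ0 hβ1
      _ = (y / (y + (M + 1 : ℕ))) ^ β := by
          rw [← Real.mul_rpow (by positivity) (by positivity), div_mul_div_cancel₀ hyM.ne']
          push_cast
          rw [add_assoc]

lemma rpow_mul_prod_div_add_le_rpow (hy : 0 < y) (hβ0 : 0 ≤ β) (hβ1 : β ≤ 1) (N : ℕ) :
    (N : ℝ) ^ β * ∏ i ∈ range (N + 1), (y + i) / (y + β + i) ≤ y ^ β := by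
  calc (N : ℝ) ^ β * ∏ i ∈ range (N + 1), (y + i) / (y + β + i)
      ≤ (N : ℝ) ^ β * (y / (y + (N + 1 : ℕ))) ^ β := by
        gcongr
        exact prod_div_add_le_rpow hy hβ0 hβ1 _
    _ = (N * (y / (y + (N + 1 : ℕ)))) ^ β := by
        rw [Real.mul_rpow (by positivity) (by positivity)]
    _ ≤ y ^ β := by
        gcongr
        rw [← mul_div_assoc, div_le_iff₀ (by positivity), mul_comm]
        push_cast
        gcongr
        linarith

end Gamma

lemma hasEntireEgf_prod_rpow {p δ β : ℝ} (hp : 0 < p) (hδ : 0 < δ) (hβ : β < 1) :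
    HasEntireEgf fun n => ∏ j ∈ range n, (p + j * δ) ^ β := by
  have hpow : Tendsto (fun n : ℕ => (p + n * δ) ^ (-(1 - β))) atTop (𝓝 0) :=
    (tendsto_rpow_neg_atTop (sub_pos.2 hβ)).comp <|
      tendsto_atTop_add_const_left _ p (tendsto_natCast_atTop_atTop.atTop_mul_const hδ)
  have hlin : Tendsto (fun n : ℕ => (p + n * δ) / (n + 1)) atTop (𝓝 δ) := by
    simpa [mul_comm, add_comm] using
      tendsto_add_mul_div_add_mul_atTop_nhds p 1 δ (one_ne_zero (α := ℝ))
  refine hasEntireEgf_prod_of_tendsto ?_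
  refine (zero_mul δ ▸ hpow.mul hlin).congr fun n => ?_
  rw [← mul_div_assoc, ← Real.rpow_add_one (by positivity)]
  congr 2
  ring

lemma hasCMEgf_prod_Gamma_div_Gamma {p δ β : ℝ} (hp : 0 < p) (hδ : 0 < δ) (hβ0 : 0 ≤ β)
    (hβ1 : β < 1) :
    HasCMEgf fun n =>
      ∏ j ∈ range n, Real.Gamma (p + j * δ + β) / Real.Gamma (p + j * δ) := by
  refine .of_tendsto_of_abs_le (l := atTop)
    (fun N : ℕ => hasCMEgf_prod_mul_prod (s := (N : ℝ) ^ β) (by positivity) hp hδ hβ0 (N + 1))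
    (hasEntireEgf_prod_rpow hp hδ hβ1) (fun N n => ?_) fun n => ?_
  · rw [abs_prod, abs_prod]
    refine prod_le_prod (fun _ _ => abs_nonneg _) fun j _ => ?_
    rw [abs_of_nonneg (mul_nonneg (by positivity) (prod_nonneg fun i _ => by positivity)),
      abs_of_pos (by positivity)]
    exact rpow_mul_prod_div_add_le_rpow (by positivity) hβ0 hβ1.le N
  · exact tendsto_finsetProd _ fun j _ => tendsto_rpow_mul_prod_div_add (by positivity) hβ0

/-! ### The Kilbas–Saigo function -/

lemma ksCoeff_sub_one_eq {a m : ℝ} (ha : 0 < a) (hm : 0 < m) (n : ℕ) :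
    ksCoeff a m (m - 1) n = (a * m)⁻¹ ^ n * (∏ j ∈ range n,
      Real.Gamma (a * m + j * (a * m) + (1 - a)) / Real.Gamma (a * m + j * (a * m))) / n ! := by
  rw [ksCoeff, ← prod_range_add_one_eq_factorial, Nat.cast_prod, pow_eq_prod_const,
    ← prod_mul_distrib, ← prod_div_distrib]
  refine prod_congr rfl fun j _ => ?_
  have hy : 0 < a * m + j * (a * m) := by positivity
  rw [show 1 + a * (j * m + (m - 1)) = a * m + j * (a * m) + (1 - a) by ring,
    show 1 + a * (j * m + (m - 1) + 1) = a * m + j * (a * m) + 1 by ring,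
    Real.Gamma_add_one hy.ne']
  push_cast
  field_simp
  ring

theorem kilbasSaigo_completely_monotone_general (a m : ℝ) (ha0 : 0 < a) (ha1 : a ≤ 1) (hm : 0 < m)
    (g : ℝ → ℝ) (hg : ∀ x : ℝ, g x = ∑' n : ℕ, ksCoeff a m (m - 1) n * (-x) ^ n) :
    ContDiff ℝ (⊤ : ℕ∞) g ∧
      (∀ (k : ℕ) (x : ℝ), 0 ≤ x → 0 ≤ (-1 : ℝ) ^ k * iteratedDeriv k g x) ∧
      (∀ x : ℝ, 0 ≤ x → 0 ≤ g x ∧ g x ≤ 1) := by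
  have ham : 0 < a * m := mul_pos ha0 hm
  have hb := (hasCMEgf_prod_Gamma_div_Gamma ham ham (sub_nonneg.2 ha1) (sub_lt_self 1 ha0)).pow_mul
    (inv_nonneg.2 ham.le)
  have hg_eq : g = altEgf _ := funext fun x => (hg x).trans <|
    tsum_congr fun n => by rw [ksCoeff_sub_one_eq ha0 hm]
  rw [hg_eq]
  refine ⟨hb.hasEntireEgf.contDiff_altEgf, fun k x => hb.neg_one_pow_mul_iteratedDeriv_nonneg k,
    fun x hx => ⟨hb.altEgf_nonneg hx, ?_⟩⟩
  simpa using hb.altEgf_le hx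

/-- The stretched relaxation kernel `g(x) = E_{α,1+γ/α,γ/α}(-x)` is completely
monotone on `(0,∞)`; in particular `0 ≤ g(x) ≤ 1` for `x ≥ 0`. -/
theorem kilbasSaigo_completely_monotone (α γ : ℝ)
    (hα0 : 0 < α) (hα1 : α < 1) (hγ : 0 ≤ γ) (hαγ : α + γ ≤ 1)
    (g : ℝ → ℝ)
    (hg : ∀ x : ℝ, g x = ∑' n : ℕ, ksCoeff α (1 + γ / α) (γ / α) n * (-x) ^ n) :
    ContDiffOn ℝ (⊤ : ℕ∞) g (Set.Ioi 0) ∧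
      (∀ (k : ℕ) (x : ℝ), 0 < x → 0 ≤ (-1 : ℝ) ^ k * iteratedDeriv k g x) ∧
      (∀ x : ℝ, 0 ≤ x → 0 ≤ g x ∧ g x ≤ 1) := by
  obtain ⟨hsmooth, hsign, hbound⟩ := kilbasSaigo_completely_monotone_general α (1 + γ / α) hα0
    hα1.le (by positivity) g (by simpa only [add_sub_cancel_left] using hg)
  exact ⟨hsmooth.contDiffOn, fun k x hx => hsign k x hx.le, hbound⟩
end

section
/- Let 0 < α < 1. Then for every x ≥ 0 the Mittag–Leffler function satisfies the two-sided bound 1 / (1 + Γ(1-α) x) ≤ E_α(-x) ≤ 1 / (1 + x / Γ(1+α)). In particular, for any κ > 0 and any ε > 0, e^{εt} E_α(-κ t^α) → +∞ as t → +∞, so the relaxation E_α(-κ t^α) decays slower than any exponential. -/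
open Filter
open MeasureTheory Set Topology

/-!
Write `e t = E_α(-x t ^ α)` and `f t = t ^ (α - 1) E_{α,α}(-x t ^ α)`, and let `I^ν` be the
Riemann–Liouville integral. Integrating the series termwise, by Euler's beta integral, gives
`x I^1 f = 1 - e`, `I^(1-α) f = e` and `x I^α e = 1 - e`.

The crux is `f ≥ 0`. Otherwise, by analyticity, `f` is nonnegative up to some `t` and negative just
after it. The first identity makes `e` strictly increase after `t`. But the kernel of `I^(1-α)`
decreases, so past `t` the old positive mass of `f` is weighted less and the new mass is negative:
by the second identity `e` cannot exceed `e t`.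

Once `f ≥ 0`, the function `e` is decreasing. Bounding the kernel of `I^(1-α)` below by its value
at distance `t` gives `e t ≥ t ^ (-α) / Γ(1-α) * I^1 f t`, which is the lower bound; replacing `e`
by its final value in the third identity gives the upper bound.
-/

section Gamma

lemma rpow_mul_exp_neg_le_Gamma {R y : ℝ} (hR : 0 ≤ R) (hy : 1 ≤ y) :
    R ^ (y - 1) * Real.exp (-R) ≤ Real.Gamma y := by
  have hi := Real.GammaIntegral_convergent (show 0 < y by linarith)
  rw [Real.Gamma_eq_integral (by linarith), ← integral_exp_neg_Ioi, ← integral_const_mul]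
  calc ∫ x in Ioi R, R ^ (y - 1) * Real.exp (-x)
      ≤ ∫ x in Ioi R, Real.exp (-x) * x ^ (y - 1) := by
        refine setIntegral_mono_on ((integrableOn_exp_neg_Ioi R).const_mul _)
          (hi.mono_set (Ioi_subset_Ioi hR)) measurableSet_Ioi fun x (hx : R < x) => ?_
        rw [mul_comm]
        gcongr
    _ ≤ ∫ x in Ioi 0, Real.exp (-x) * x ^ (y - 1) := by
        refine setIntegral_mono_set hi ?_ (Ioi_subset_Ioi hR).eventuallyLE
        filter_upwards [ae_restrict_mem measurableSet_Ioi] with x (hx : 0 < x)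
        positivity

lemma summable_pow_div_Gamma {α : ℝ} (hα : 0 < α) (β z : ℝ) :
    Summable fun n : ℕ => z ^ n / Real.Gamma (α * n + β) := by
  -- `Γ(α n + β)` is at least a multiple of `R ^ (α n)`; this `R` makes `R ^ α` exceed `|z|`.
  set R : ℝ := (|z| + 1) ^ α⁻¹
  have hR : 0 < R := by positivity
  have hRα : R ^ α = |z| + 1 := Real.rpow_inv_rpow (by positivity) hα.ne'
  have hgeom : Summable fun n : ℕ => (R ^ (β - 1) * Real.exp (-R))⁻¹ * (|z| / (|z| + 1)) ^ n := by
    refine (summable_geometric_of_lt_one (by positivity) ?_).mul_left _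
    rw [div_lt_one (by positivity)]
    linarith
  refine hgeom.of_norm_bounded_eventually_nat ?_
  have hlarge : ∀ᶠ n : ℕ in atTop, 1 - β ≤ α * n :=
    (tendsto_natCast_atTop_atTop.const_mul_atTop hα).eventually_ge_atTop _
  filter_upwards [hlarge] with n hn
  have hΓ : (|z| + 1) ^ n * R ^ (β - 1) * Real.exp (-R) ≤ Real.Gamma (α * n + β) := by
    have h := rpow_mul_exp_neg_le_Gamma hR.le (show 1 ≤ α * n + β by linarith)
    rwa [add_sub_assoc, Real.rpow_add hR, Real.rpow_mul hR.le, hRα, Real.rpow_natCast] at h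
  have hΓ_pos : 0 < Real.Gamma (α * n + β) := lt_of_lt_of_le (by positivity) hΓ
  rw [norm_div, norm_pow, Real.norm_eq_abs, Real.norm_of_nonneg hΓ_pos.le]
  calc |z| ^ n / Real.Gamma (α * n + β)
      ≤ |z| ^ n / ((|z| + 1) ^ n * R ^ (β - 1) * Real.exp (-R)) := by gcongr
    _ = (R ^ (β - 1) * Real.exp (-R))⁻¹ * (|z| / (|z| + 1)) ^ n := by rw [div_pow]; field_simp

lemma intervalIntegrable_sub_rpow_mul_rpow {β ν t : ℝ} (hβ : 0 < β) (hν : 0 < ν) (ht : 0 < t) :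
    IntervalIntegrable (fun s => (t - s) ^ (ν - 1) * s ^ (β - 1)) volume 0 t := by
  have left_half {β : ℝ} (ν : ℝ) (hβ : 0 < β) :
      IntervalIntegrable (fun s => (t - s) ^ (ν - 1) * s ^ (β - 1)) volume 0 (t / 2) := by
    refine (intervalIntegral.intervalIntegrable_rpow' (by linarith)).continuousOn_mul ?_
    refine ContinuousOn.rpow_const (by fun_prop) fun s hs => Or.inl ?_
    rw [uIcc_of_le (by linarith)] at hs
    linarith [hs.2]
  have right_half := ((left_half β hν).comp_sub_left t).symm
  refine (left_half ν hβ).trans ?_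
  convert right_half using 2 with s
  · rw [mul_comm, sub_sub_cancel]
  · ring
  · ring

lemma integral_sub_rpow_mul_rpow {β ν t : ℝ} (hβ : 0 < β) (hν : 0 < ν) (ht : 0 < t) :
    ∫ s in 0..t, (t - s) ^ (ν - 1) * s ^ (β - 1) =
      Real.Gamma ν * Real.Gamma β / Real.Gamma (β + ν) * t ^ (β + ν - 1) := by
  have h := Complex.betaIntegral_scaled β ν ht
  have hcast : ∫ s in 0..t, (s : ℂ) ^ ((β : ℂ) - 1) * ((t : ℂ) - s) ^ ((ν : ℂ) - 1) =
      ∫ s in 0..t, (((t - s) ^ (ν - 1) * s ^ (β - 1) : ℝ) : ℂ) := by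
    refine intervalIntegral.integral_congr fun s hs => ?_
    rw [uIcc_of_le ht.le] at hs
    rw [mul_comm, Complex.ofReal_mul, Complex.ofReal_cpow hs.1,
      Complex.ofReal_cpow (sub_nonneg.mpr hs.2)]
    push_cast
    rfl
  rw [Complex.betaIntegral_eq_Gamma_mul_div _ _ (by simpa) (by simpa), hcast,
    intervalIntegral.integral_ofReal, Complex.Gamma_ofReal, Complex.Gamma_ofReal,
    ← Complex.ofReal_add, Complex.Gamma_ofReal, ← Complex.ofReal_one, ← Complex.ofReal_sub,
    ← Complex.ofReal_cpow ht.le] at h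
  rw [mul_comm (Real.Gamma ν), mul_comm (_ / _)]
  exact_mod_cast h

end Gamma

section RiemannLiouville

/-- The Riemann–Liouville integral `I^ν g (t)` of order `ν > 0` and base point `0`. -/
noncomputable def riemannLiouvilleIntegral (ν : ℝ) (g : ℝ → ℝ) (t : ℝ) : ℝ :=
  (Real.Gamma ν)⁻¹ * ∫ s in 0..t, (t - s) ^ (ν - 1) * g s

variable {ν t : ℝ} {g h : ℝ → ℝ}

lemma riemannLiouvilleIntegral_one : riemannLiouvilleIntegral 1 g t = ∫ s in 0..t, g s := by
  simp [riemannLiouvilleIntegral]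

lemma riemannLiouvilleIntegral_const_mul (k : ℝ) :
    riemannLiouvilleIntegral ν (fun s => k * g s) t = k * riemannLiouvilleIntegral ν g t := by
  simp only [riemannLiouvilleIntegral, mul_left_comm _ k, intervalIntegral.integral_const_mul]

lemma riemannLiouvilleIntegral_congr (ht : 0 ≤ t) (hgh : EqOn g h (Ioo 0 t)) :
    riemannLiouvilleIntegral ν g t = riemannLiouvilleIntegral ν h t := by
  rw [riemannLiouvilleIntegral, riemannLiouvilleIntegral,
    intervalIntegral.integral_congr_Ioo_of_le ht fun s hs => by rw [hgh hs]]

lemma riemannLiouvilleIntegral_mono (hν : 0 ≤ ν) (ht : 0 ≤ t)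
    (hg : IntervalIntegrable (fun s => (t - s) ^ (ν - 1) * g s) volume 0 t)
    (hh : IntervalIntegrable (fun s => (t - s) ^ (ν - 1) * h s) volume 0 t)
    (hgh : ∀ s ∈ Ioo 0 t, g s ≤ h s) :
    riemannLiouvilleIntegral ν g t ≤ riemannLiouvilleIntegral ν h t := by
  refine mul_le_mul_of_nonneg_left ?_ (inv_nonneg.mpr (Real.Gamma_nonneg_of_nonneg hν))
  refine intervalIntegral.integral_mono_on_of_le_Ioo ht hg hh fun s hs => ?_
  exact mul_le_mul_of_nonneg_left (hgh s hs) (Real.rpow_nonneg (sub_nonneg.mpr hs.2.le) _)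

lemma riemannLiouvilleIntegral_rpow {β : ℝ} (hν : 0 < ν) (hβ : 0 < β) (ht : 0 < t) :
    riemannLiouvilleIntegral ν (fun s => s ^ (β - 1)) t =
      Real.Gamma β / Real.Gamma (β + ν) * t ^ (β + ν - 1) := by
  rw [riemannLiouvilleIntegral, integral_sub_rpow_mul_rpow hβ hν ht]
  have := (Real.Gamma_pos_of_pos hν).ne'
  field_simp

lemma riemannLiouvilleIntegral_const (hν : 0 < ν) (k : ℝ) (ht : 0 < t) :
    riemannLiouvilleIntegral ν (fun _ => k) t = k / Real.Gamma (1 + ν) * t ^ ν := by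
  have h := riemannLiouvilleIntegral_rpow hν one_pos ht
  simp only [sub_self, Real.rpow_zero, Real.Gamma_one, add_sub_cancel_left] at h
  calc riemannLiouvilleIntegral ν (fun _ => k) t
      = k * riemannLiouvilleIntegral ν (fun _ => 1) t := by
        simpa only [mul_one] using riemannLiouvilleIntegral_const_mul (g := fun _ => 1) k
    _ = k / Real.Gamma (1 + ν) * t ^ ν := by rw [h]; ring

lemma riemannLiouvilleIntegral_tsum {F : ℕ → ℝ → ℝ} (hν : 0 < ν) (ht : 0 ≤ t)
    (hF : ∀ n, IntervalIntegrable (fun s => (t - s) ^ (ν - 1) * F n s) volume 0 t)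
    (hsum : Summable fun n => riemannLiouvilleIntegral ν (fun s => |F n s|) t) :
    riemannLiouvilleIntegral ν (fun s => ∑' n, F n s) t =
      ∑' n, riemannLiouvilleIntegral ν (F n) t := by
  have hnorm (n : ℕ) : ∫ s in Ioc 0 t, ‖(t - s) ^ (ν - 1) * F n s‖ =
      Real.Gamma ν * riemannLiouvilleIntegral ν (fun s => |F n s|) t := by
    rw [riemannLiouvilleIntegral, mul_inv_cancel_left₀ (Real.Gamma_pos_of_pos hν).ne',
      intervalIntegral.integral_of_le ht]
    refine setIntegral_congr_fun measurableSet_Ioc fun s hs => ?_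
    rw [norm_mul, Real.norm_of_nonneg (Real.rpow_nonneg (sub_nonneg.mpr hs.2) _),
      Real.norm_eq_abs]
  have hswap := integral_tsum_of_summable_integral_norm (fun n => (hF n).1)
    (by simpa only [hnorm] using hsum.mul_left _)
  simp only [riemannLiouvilleIntegral, tsum_mul_left, intervalIntegral.integral_of_le ht] at hswap ⊢
  rw [hswap]

lemma rpow_div_Gamma_mul_integral_le_riemannLiouvilleIntegral (hν : 0 ≤ ν) (hν1 : ν ≤ 1)
    (ht : 0 ≤ t) (hg : IntervalIntegrable g volume 0 t)
    (hνg : IntervalIntegrable (fun s => (t - s) ^ (ν - 1) * g s) volume 0 t)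
    (hpos : ∀ s ∈ Ioo 0 t, 0 ≤ g s) :
    t ^ (ν - 1) / Real.Gamma ν * ∫ s in 0..t, g s ≤ riemannLiouvilleIntegral ν g t := by
  rw [div_mul_eq_mul_div, div_eq_inv_mul, ← intervalIntegral.integral_const_mul]
  refine mul_le_mul_of_nonneg_left ?_ (inv_nonneg.mpr (Real.Gamma_nonneg_of_nonneg hν))
  refine intervalIntegral.integral_mono_on_of_le_Ioo ht (hg.const_mul _) hνg fun s hs => ?_
  exact mul_le_mul_of_nonneg_right (Real.rpow_le_rpow_of_nonpos (by linarith [hs.2])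
    (by linarith [hs.1]) (by linarith)) (hpos s hs)

lemma riemannLiouvilleIntegral_le_of_nonneg_of_nonpos {T : ℝ} (hν : 0 ≤ ν) (hν1 : ν ≤ 1)
    (ht : 0 ≤ t) (htT : t ≤ T)
    (hgt : IntervalIntegrable (fun s => (t - s) ^ (ν - 1) * g s) volume 0 t)
    (hgT : IntervalIntegrable (fun s => (T - s) ^ (ν - 1) * g s) volume 0 T)
    (hpos : ∀ s ∈ Ioo 0 t, 0 ≤ g s) (hneg : ∀ s ∈ Ioo t T, g s ≤ 0) :
    riemannLiouvilleIntegral ν g T ≤ riemannLiouvilleIntegral ν g t := by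
  refine mul_le_mul_of_nonneg_left ?_ (inv_nonneg.mpr (Real.Gamma_nonneg_of_nonneg hν))
  have ht_mem : t ∈ uIcc 0 T := by rw [uIcc_of_le (ht.trans htT)]; exact ⟨ht, htT⟩
  have hold := hgT.mono_set (uIcc_subset_uIcc left_mem_uIcc ht_mem)
  have hnew := hgT.mono_set (uIcc_subset_uIcc ht_mem right_mem_uIcc)
  have hold_le : ∫ s in 0..t, (T - s) ^ (ν - 1) * g s ≤ ∫ s in 0..t, (t - s) ^ (ν - 1) * g s := by
    refine intervalIntegral.integral_mono_on_of_le_Ioo ht hold hgt fun s hs => ?_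
    exact mul_le_mul_of_nonneg_right (Real.rpow_le_rpow_of_nonpos (sub_pos.mpr hs.2)
      (by linarith) (by linarith)) (hpos s hs)
  have hnew_le : ∫ s in t..T, (T - s) ^ (ν - 1) * g s ≤ ∫ _ in t..T, (0 : ℝ) := by
    refine intervalIntegral.integral_mono_on_of_le_Ioo htT hnew intervalIntegrable_const
      fun s hs => ?_
    exact mul_nonpos_of_nonneg_of_nonpos (Real.rpow_nonneg (by linarith [hs.2]) _) (hneg s hs)
  rw [intervalIntegral.integral_zero] at hnew_le
  rw [← intervalIntegral.integral_add_adjacent_intervals hold hnew]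
  linarith

end RiemannLiouville

section Analytic

variable {f : ℝ → ℝ}

lemma eventually_nhdsGT_nonneg_or_neg_of_analyticAt {p : ℝ} (hf : AnalyticAt ℝ f p) :
    (∀ᶠ x in 𝓝[>] p, 0 ≤ f x) ∨ ∀ᶠ x in 𝓝[>] p, f x < 0 := by
  rcases hf.eventually_eq_zero_or_eventually_ne_zero with hzero | hne
  · exact .inl ((hzero.filter_mono nhdsWithin_le_nhds).mono fun x hx => hx.ge)
  have hcont : ∀ᶠ x in 𝓝[>] p, ContinuousAt f x :=
    (hf.eventually_analyticAt.filter_mono nhdsWithin_le_nhds).mono fun x hx => hx.continuousAt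
  have hne' : ∀ᶠ x in 𝓝[>] p, f x ≠ 0 := hne.filter_mono (nhdsGT_le_nhdsNE p)
  obtain ⟨q, hpq : p < q, hq⟩ := mem_nhdsGT_iff_exists_Ioo_subset.mp (hcont.and hne')
  have hIoo : Ioo p q ∈ 𝓝[>] p := Ioo_mem_nhdsGT hpq
  by_contra! hsign
  obtain ⟨x, hfx, hx⟩ := (hsign.1.and_eventually hIoo).exists
  obtain ⟨y, hfy, hy⟩ := (hsign.2.and_eventually hIoo).exists
  obtain ⟨w, hw, hfw⟩ := isPreconnected_Ioo.intermediate_value hx hy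
    (fun z hz => (hq hz).1.continuousWithinAt) ⟨hfx.le, hfy⟩
  exact (hq hw).2 hfw

lemma nonneg_of_not_eventually_neg {a b : ℝ} (hc : ContinuousOn f (Icc a b)) (hab : a ≤ b)
    (ha : 0 < f a) (hf : ∀ p ∈ Ioo a b, AnalyticAt ℝ f p)
    (h : ∀ p ∈ Ioo a b, (∀ x ∈ Icc a p, 0 ≤ f x) → ¬∀ᶠ x in 𝓝[>] p, f x < 0) : 0 ≤ f b := by
  have hclosed : IsClosed ({x | 0 ≤ f x} ∩ Icc a b) := by
    rw [inter_comm]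
    exact hc.preimage_isClosed_of_isClosed isClosed_Icc isClosed_Ici
  refine hclosed.Icc_subset_of_forall_mem_nhdsGT_of_Icc_subset ha.le (fun p hp hnonneg => ?_)
    (right_mem_Icc.mpr hab)
  rcases hp.1.eq_or_lt with rfl | hap
  · have hcont : ContinuousWithinAt f (Ioi a) a :=
      (hc a (left_mem_Icc.mpr hab)).mono_of_mem_nhdsWithin (Icc_mem_nhdsGT hp.2)
    exact (hcont.eventually_const_lt ha).mono fun x hx => hx.le
  · exact (eventually_nhdsGT_nonneg_or_neg_of_analyticAt (hf p ⟨hap, hp.2⟩)).resolve_right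
      (h p ⟨hap, hp.2⟩ hnonneg)

end Analytic

section MittagLeffler

/-- The two-parameter Mittag-Leffler function `E_{α,β}(z)`. The classical `E_α` is
`mittagLeffler α 1`. -/
noncomputable def mittagLeffler (α β z : ℝ) : ℝ := ∑' n : ℕ, z ^ n / Real.Gamma (α * n + β)

variable {α β ν t : ℝ}

lemma mittagLeffler_zero : mittagLeffler α β 0 = (Real.Gamma β)⁻¹ := by
  rw [mittagLeffler, tsum_eq_single 0 fun n hn => by simp [hn]]
  simp

lemma mittagLeffler_eq_inv_Gamma_add (hα : 0 < α) (β z : ℝ) :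
    mittagLeffler α β z = (Real.Gamma β)⁻¹ + z * mittagLeffler α (β + α) z := by
  rw [mittagLeffler, (summable_pow_div_Gamma hα β z).tsum_eq_zero_add, mittagLeffler,
    ← tsum_mul_left]
  congr 1
  · simp
  · refine tsum_congr fun n => ?_
    rw [pow_succ', mul_div_assoc]
    congr 3
    push_cast
    ring

lemma analyticOnNhd_mittagLeffler (hα : 0 < α) (β : ℝ) :
    AnalyticOnNhd ℝ (mittagLeffler α β) univ := by
  set p := FormalMultilinearSeries.ofScalars ℝ fun n : ℕ => (Real.Gamma (α * n + β))⁻¹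
  have hradius : p.radius = ⊤ := by
    refine p.radius_eq_top_of_summable_norm fun r => ?_
    refine (summable_pow_div_Gamma hα β r).norm.congr fun n => ?_
    rw [FormalMultilinearSeries.ofScalars_norm, norm_div, norm_inv, norm_pow, NNReal.norm_eq,
      inv_mul_eq_div]
  have hsum : mittagLeffler α β = p.sum := by
    ext z
    refine Eq.trans ?_ (FormalMultilinearSeries.ofScalars_sum_eq _ z).symm
    exact tsum_congr fun n => by rw [smul_eq_mul, inv_mul_eq_div]
  have h := (p.hasFPowerSeriesOnBall (by simp [hradius])).analyticOnNhd
  rwa [hradius, Metric.eball_top, ← hsum] at h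

lemma continuous_mittagLeffler (hα : 0 < α) (β : ℝ) : Continuous (mittagLeffler α β) :=
  continuousOn_univ.mp (analyticOnNhd_mittagLeffler hα β).continuousOn

/-- The Mittag-Leffler kernel `t ^ (β - 1) * E_{α,β}(z t ^ α)`: this normalization is the one for
which `I^ν` shifts `β` by `ν`. -/
noncomputable def mittagLefflerKernel (α β z t : ℝ) : ℝ :=
  t ^ (β - 1) * mittagLeffler α β (z * t ^ α)

lemma mittagLefflerKernel_one_right (z : ℝ) :
    mittagLefflerKernel α β z 1 = mittagLeffler α β z := by
  simp [mittagLefflerKernel]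

lemma hasSum_mittagLefflerKernel (hα : 0 < α) (β z : ℝ) (ht : 0 < t) :
    HasSum (fun n : ℕ => z ^ n / Real.Gamma (α * n + β) * t ^ (α * n + β - 1))
      (mittagLefflerKernel α β z t) := by
  refine ((summable_pow_div_Gamma hα β (z * t ^ α)).hasSum.mul_left (t ^ (β - 1))).congr_fun
    fun n => ?_
  rw [mul_pow, ← Real.rpow_mul_natCast ht.le, add_sub_assoc, Real.rpow_add ht]
  ring

lemma mittagLefflerKernel_one_eq_one_add (hα : 0 < α) (z t : ℝ) :
    mittagLefflerKernel α 1 z t = 1 + z * mittagLefflerKernel α (1 + α) z t := by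
  simp only [mittagLefflerKernel, mittagLeffler_eq_inv_Gamma_add hα 1, sub_self, Real.rpow_zero,
    Real.Gamma_one, add_sub_cancel_left]
  ring

lemma intervalIntegrable_sub_rpow_mul_mittagLefflerKernel (hα : 0 < α) (hβ : 0 < β)
    (hν : 0 < ν) (z : ℝ) (ht : 0 < t) :
    IntervalIntegrable (fun s => (t - s) ^ (ν - 1) * mittagLefflerKernel α β z s) volume 0 t := by
  simp only [mittagLefflerKernel, ← mul_assoc]
  exact (intervalIntegrable_sub_rpow_mul_rpow hβ hν ht).mul_continuousOn
    ((continuous_mittagLeffler hα β).comp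
      (continuous_const.mul (Real.continuous_rpow_const hα.le))).continuousOn

lemma intervalIntegrable_mittagLefflerKernel (hα : 0 < α) (hβ : 0 < β) (z : ℝ)
    (ht : 0 < t) : IntervalIntegrable (mittagLefflerKernel α β z) volume 0 t := by
  simpa using intervalIntegrable_sub_rpow_mul_mittagLefflerKernel hα hβ one_pos z ht

lemma riemannLiouvilleIntegral_mittagLefflerKernel (hα : 0 < α) (hβ : 0 < β) (hν : 0 < ν) (z : ℝ)
    (ht : 0 < t) :
    riemannLiouvilleIntegral ν (mittagLefflerKernel α β z) t =
      mittagLefflerKernel α (β + ν) z t := by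
  set F : ℕ → ℝ → ℝ := fun n s => z ^ n / Real.Gamma (α * n + β) * s ^ (α * n + β - 1) with hF
  have hβn (n : ℕ) : 0 < α * n + β := by positivity
  have hΓ (n : ℕ) : 0 < Real.Gamma (α * n + β) := Real.Gamma_pos_of_pos (hβn n)
  have hterm (w : ℝ) (n : ℕ) :
      riemannLiouvilleIntegral ν
          (fun s => w ^ n / Real.Gamma (α * n + β) * s ^ (α * n + β - 1)) t =
        w ^ n / Real.Gamma (α * n + (β + ν)) * t ^ (α * n + (β + ν) - 1) := by
    rw [riemannLiouvilleIntegral_const_mul, riemannLiouvilleIntegral_rpow hν (hβn n) ht,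
      ← mul_assoc, div_mul_div_cancel₀ (hΓ n).ne', add_assoc]
  have hint (n : ℕ) : IntervalIntegrable (fun s => (t - s) ^ (ν - 1) * F n s) volume 0 t := by
    simp only [hF, mul_left_comm _ (z ^ n / _)]
    exact (intervalIntegrable_sub_rpow_mul_rpow (hβn n) hν ht).const_mul _
  have habs (n : ℕ) : riemannLiouvilleIntegral ν (fun s => |F n s|) t =
      |z| ^ n / Real.Gamma (α * n + (β + ν)) * t ^ (α * n + (β + ν) - 1) := by
    rw [← hterm]
    refine riemannLiouvilleIntegral_congr ht.le fun s hs => ?_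
    simp only [hF, abs_mul, abs_div, abs_pow, abs_of_pos (hΓ n),
      abs_of_pos (Real.rpow_pos_of_pos hs.1 _)]
  have hsum : Summable fun n => riemannLiouvilleIntegral ν (fun s => |F n s|) t := by
    simpa only [habs] using (hasSum_mittagLefflerKernel hα (β + ν) |z| ht).summable
  calc riemannLiouvilleIntegral ν (mittagLefflerKernel α β z) t
      = riemannLiouvilleIntegral ν (fun s => ∑' n, F n s) t :=
        riemannLiouvilleIntegral_congr ht.le fun s hs =>
          (hasSum_mittagLefflerKernel hα β z hs.1).tsum_eq.symm
    _ = ∑' n, riemannLiouvilleIntegral ν (F n) t :=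
        riemannLiouvilleIntegral_tsum hν ht.le hint hsum
    _ = mittagLefflerKernel α (β + ν) z t := by
        simp only [hF, hterm, (hasSum_mittagLefflerKernel hα (β + ν) z ht).tsum_eq]

end MittagLeffler

section Relaxation

variable {α x t : ℝ}

lemma riemannLiouvilleIntegral_one_sub_mittagLefflerKernel (hα0 : 0 < α) (hα1 : α < 1)
    (z : ℝ) (ht : 0 < t) :
    riemannLiouvilleIntegral (1 - α) (mittagLefflerKernel α α z) t =
      mittagLefflerKernel α 1 z t := by
  rw [riemannLiouvilleIntegral_mittagLefflerKernel hα0 hα0 (sub_pos.mpr hα1) z ht,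
    add_sub_cancel]

lemma mul_riemannLiouvilleIntegral_mittagLefflerKernel_one (hα : 0 < α) (x : ℝ) (ht : 0 < t) :
    x * riemannLiouvilleIntegral α (mittagLefflerKernel α 1 (-x)) t =
      1 - mittagLefflerKernel α 1 (-x) t := by
  rw [riemannLiouvilleIntegral_mittagLefflerKernel hα one_pos hα _ ht,
    mittagLefflerKernel_one_eq_one_add hα]
  ring

lemma mul_integral_mittagLefflerKernel_self (hα : 0 < α) (x : ℝ) (ht : 0 < t) :
    x * ∫ s in 0..t, mittagLefflerKernel α α (-x) s = 1 - mittagLefflerKernel α 1 (-x) t := by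
  rw [← riemannLiouvilleIntegral_one,
    riemannLiouvilleIntegral_mittagLefflerKernel hα hα one_pos _ ht,
    mittagLefflerKernel_one_eq_one_add hα, add_comm α]
  ring

lemma mul_integral_mittagLefflerKernel_self_eq_sub {s : ℝ} (hα : 0 < α) (x : ℝ) (hs : 0 < s)
    (ht : 0 < t) :
    x * ∫ r in s..t, mittagLefflerKernel α α (-x) r =
      mittagLefflerKernel α 1 (-x) s - mittagLefflerKernel α 1 (-x) t := by
  rw [← intervalIntegral.integral_interval_sub_left
      (intervalIntegrable_mittagLefflerKernel hα hα _ ht)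
      (intervalIntegrable_mittagLefflerKernel hα hα _ hs),
    mul_sub, mul_integral_mittagLefflerKernel_self hα x ht,
    mul_integral_mittagLefflerKernel_self hα x hs]
  ring

lemma not_eventually_mittagLefflerKernel_self_neg (hα0 : 0 < α) (hα1 : α < 1) (hx : 0 < x)
    (ht : 0 < t) (hpos : ∀ s ∈ Ioo 0 t, 0 ≤ mittagLefflerKernel α α (-x) s) :
    ¬∀ᶠ s in 𝓝[>] t, mittagLefflerKernel α α (-x) s < 0 := by
  intro hneg
  obtain ⟨T, htT : t < T, hnegT⟩ := mem_nhdsGT_iff_exists_Ioo_subset.mp hneg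
  have hT : 0 < T := ht.trans htT
  have hle : mittagLefflerKernel α 1 (-x) T ≤ mittagLefflerKernel α 1 (-x) t := by
    rw [← riemannLiouvilleIntegral_one_sub_mittagLefflerKernel hα0 hα1 _ ht,
      ← riemannLiouvilleIntegral_one_sub_mittagLefflerKernel hα0 hα1 _ hT]
    have hν : 0 < 1 - α := sub_pos.mpr hα1
    exact riemannLiouvilleIntegral_le_of_nonneg_of_nonpos hν.le (by linarith) ht.le htT.le
      (intervalIntegrable_sub_rpow_mul_mittagLefflerKernel hα0 hα0 hν _ ht)
      (intervalIntegrable_sub_rpow_mul_mittagLefflerKernel hα0 hα0 hν _ hT)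
      hpos fun s hs => (hnegT hs).le
  have hlt : mittagLefflerKernel α 1 (-x) t < mittagLefflerKernel α 1 (-x) T := by
    have hint : IntervalIntegrable (mittagLefflerKernel α α (-x)) volume t T :=
      (intervalIntegrable_mittagLefflerKernel hα0 hα0 _ ht).symm.trans
        (intervalIntegrable_mittagLefflerKernel hα0 hα0 _ hT)
    have h : 0 < ∫ s in t..T, -mittagLefflerKernel α α (-x) s :=
      intervalIntegral.intervalIntegral_pos_of_pos_on hint.neg
        (fun s hs => neg_pos.mpr (hnegT hs)) htT
    rw [intervalIntegral.integral_neg, neg_pos] at h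
    linarith [mul_integral_mittagLefflerKernel_self_eq_sub hα0 x ht hT, mul_neg_of_pos_of_neg hx h]
  exact hle.not_gt hlt

lemma mittagLeffler_self_neg_nonneg (hα0 : 0 < α) (hα1 : α < 1) (hx : 0 ≤ x) :
    0 ≤ mittagLeffler α α (-x) := by
  have hΓ : 0 < (Real.Gamma α)⁻¹ := inv_pos.mpr (Real.Gamma_pos_of_pos hα0)
  rcases hx.eq_or_lt with rfl | hx
  · rw [neg_zero, mittagLeffler_zero]
    exact hΓ.le
  have hcont : Continuous fun s : ℝ => mittagLeffler α α (-x * s ^ α) :=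
    (continuous_mittagLeffler hα0 α).comp
      (continuous_const.mul (Real.continuous_rpow_const hα0.le))
  suffices 0 ≤ mittagLeffler α α (-x * 1 ^ α) by simpa using this
  refine nonneg_of_not_eventually_neg (f := fun s : ℝ => mittagLeffler α α (-x * s ^ α))
    hcont.continuousOn zero_le_one ?_ (fun p hp => ?_) fun p hp hnonneg hneg => ?_
  · rwa [Real.zero_rpow hα0.ne', mul_zero, mittagLeffler_zero]
  · have hrpow : AnalyticAt ℝ (fun s : ℝ => s ^ α) p :=
      (Real.contDiffAt_rpow_const_of_ne hp.1.ne').analyticAt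
    exact (analyticOnNhd_mittagLeffler hα0 α _ (mem_univ _)).fun_comp (analyticAt_const.mul hrpow)
  · refine not_eventually_mittagLefflerKernel_self_neg hα0 hα1 hx hp.1 (fun s hs => ?_) ?_
    · exact mul_nonneg (Real.rpow_nonneg hs.1.le _) (hnonneg s ⟨hs.1.le, hs.2.le⟩)
    · filter_upwards [hneg, self_mem_nhdsWithin] with s hs (hps : p < s)
      exact mul_neg_of_pos_of_neg (Real.rpow_pos_of_pos (hp.1.trans hps) _) hs

lemma mittagLefflerKernel_self_neg_nonneg (hα0 : 0 < α) (hα1 : α < 1) (hx : 0 ≤ x) (ht : 0 ≤ t) :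
    0 ≤ mittagLefflerKernel α α (-x) t := by
  rw [mittagLefflerKernel, neg_mul]
  exact mul_nonneg (by positivity) (mittagLeffler_self_neg_nonneg hα0 hα1 (by positivity))

lemma antitoneOn_mittagLefflerKernel_one (hα0 : 0 < α) (hα1 : α < 1) (hx : 0 ≤ x) :
    AntitoneOn (mittagLefflerKernel α 1 (-x)) (Ioi 0) := by
  intro s (hs : 0 < s) t ht hst
  rw [← sub_nonneg, ← mul_integral_mittagLefflerKernel_self_eq_sub hα0 x hs ht]
  exact mul_nonneg hx <| intervalIntegral.integral_nonneg hst fun r hr =>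
    mittagLefflerKernel_self_neg_nonneg hα0 hα1 hx (hs.le.trans hr.1)

theorem one_div_one_add_Gamma_mul_le_mittagLeffler_neg (hα0 : 0 < α) (hα1 : α < 1) (hx : 0 ≤ x) :
    1 / (1 + Real.Gamma (1 - α) * x) ≤ mittagLeffler α 1 (-x) := by
  have hν : 0 < 1 - α := sub_pos.mpr hα1
  have hΓ : 0 < Real.Gamma (1 - α) := Real.Gamma_pos_of_pos hν
  have h := rpow_div_Gamma_mul_integral_le_riemannLiouvilleIntegral hν.le (by linarith) zero_le_one
    (intervalIntegrable_mittagLefflerKernel hα0 hα0 (-x) one_pos)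
    (intervalIntegrable_sub_rpow_mul_mittagLefflerKernel hα0 hα0 hν (-x) one_pos)
    fun s hs => mittagLefflerKernel_self_neg_nonneg hα0 hα1 hx hs.1.le
  rw [riemannLiouvilleIntegral_one_sub_mittagLefflerKernel hα0 hα1 _ one_pos, Real.one_rpow,
    one_div_mul_eq_div, div_le_iff₀' hΓ, mittagLefflerKernel_one_right] at h
  have hidentity := mul_integral_mittagLefflerKernel_self hα0 x one_pos
  rw [mittagLefflerKernel_one_right] at hidentity
  rw [div_le_iff₀' (by positivity)]
  linarith [mul_le_mul_of_nonneg_left h hx]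

theorem mittagLeffler_neg_le_one_div_one_add_div_Gamma (hα0 : 0 < α) (hα1 : α < 1) (hx : 0 ≤ x) :
    mittagLeffler α 1 (-x) ≤ 1 / (1 + x / Real.Gamma (1 + α)) := by
  set E := mittagLeffler α 1 (-x) with hE
  have hden : 0 < 1 + x / Real.Gamma (1 + α) :=
    add_pos_of_pos_of_nonneg one_pos (div_nonneg hx (Real.Gamma_nonneg_of_nonneg (by linarith)))
  have hconst : IntervalIntegrable (fun s => (1 - s) ^ (α - 1) * E) volume 0 1 := by
    simpa using (intervalIntegrable_sub_rpow_mul_rpow one_pos hα0 one_pos).mul_const E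
  have h : E / Real.Gamma (1 + α) ≤
      riemannLiouvilleIntegral α (mittagLefflerKernel α 1 (-x)) 1 := by
    calc E / Real.Gamma (1 + α) = riemannLiouvilleIntegral α (fun _ => E) 1 := by
          rw [riemannLiouvilleIntegral_const hα0 _ one_pos, Real.one_rpow, mul_one]
      _ ≤ riemannLiouvilleIntegral α (mittagLefflerKernel α 1 (-x)) 1 := by
          refine riemannLiouvilleIntegral_mono hα0.le zero_le_one hconst
            (intervalIntegrable_sub_rpow_mul_mittagLefflerKernel hα0 one_pos hα0 _ one_pos)
            fun s hs => ?_
          rw [hE, ← mittagLefflerKernel_one_right]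
          exact antitoneOn_mittagLefflerKernel_one hα0 hα1 hx hs.1 (mem_Ioi.mpr one_pos) hs.2.le
  have hidentity := mul_riemannLiouvilleIntegral_mittagLefflerKernel_one hα0 x one_pos
  rw [mittagLefflerKernel_one_right] at hidentity
  rw [le_div_iff₀' hden]
  calc (1 + x / Real.Gamma (1 + α)) * E = E + x * (E / Real.Gamma (1 + α)) := by ring
    _ ≤ E + x * riemannLiouvilleIntegral α (mittagLefflerKernel α 1 (-x)) 1 := by gcongr
    _ = 1 := by rw [hidentity, add_sub_cancel]

end Relaxation

lemma tendsto_exp_mul_mul_atTop_of_one_div_one_add_rpow_le {f : ℝ → ℝ} {C a ε : ℝ} (hC : 0 ≤ C)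
    (ha : 0 ≤ a) (hε : 0 < ε) (hf : ∀ᶠ t in atTop, 1 / (1 + C * t ^ a) ≤ f t) :
    Tendsto (fun t => Real.exp (ε * t) * f t) atTop atTop := by
  refine tendsto_atTop_mono' _ ?_ ((tendsto_exp_mul_div_rpow_atTop a ε hε).const_mul_atTop
    (show 0 < (1 + C)⁻¹ by positivity))
  filter_upwards [hf, eventually_ge_atTop 1] with t hft ht
  have hta : 1 ≤ t ^ a := Real.one_le_rpow ht ha
  calc (1 + C)⁻¹ * (Real.exp (ε * t) / t ^ a)
      = Real.exp (ε * t) * (1 / (t ^ a + C * t ^ a)) := by field_simp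
    _ ≤ Real.exp (ε * t) * (1 / (1 + C * t ^ a)) := by gcongr
    _ ≤ Real.exp (ε * t) * f t := by gcongr

/-- Two-sided bound for the Mittag–Leffler kernel, `0 < α < 1`:
`1/(1 + Γ(1-α) x) ≤ E_α(-x) ≤ 1/(1 + x/Γ(1+α))` for `x ≥ 0`; consequently
`e^{ε t} E_α(-κ t^α) → ∞` as `t → ∞` for any `κ, ε > 0`, i.e. the relaxation
decays slower than any exponential. -/
theorem mittagLeffler_two_sided_bound (α : ℝ) (hα0 : 0 < α) (hα1 : α < 1) :
    (∀ x : ℝ, 0 ≤ x →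
        1 / (1 + Real.Gamma (1 - α) * x)
            ≤ (∑' n : ℕ, (-x) ^ n / Real.Gamma (α * n + 1)) ∧
          (∑' n : ℕ, (-x) ^ n / Real.Gamma (α * n + 1))
            ≤ 1 / (1 + x / Real.Gamma (1 + α))) ∧
      ∀ κ ε : ℝ, 0 < κ → 0 < ε →
        Tendsto
          (fun t : ℝ =>
            Real.exp (ε * t) *
              ∑' n : ℕ, (-(κ * t ^ α)) ^ n / Real.Gamma (α * n + 1))
          atTop atTop := by
  refine ⟨fun x hx => ⟨one_div_one_add_Gamma_mul_le_mittagLeffler_neg hα0 hα1 hx,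
    mittagLeffler_neg_le_one_div_one_add_div_Gamma hα0 hα1 hx⟩, fun κ ε hκ hε => ?_⟩
  have hC : 0 ≤ Real.Gamma (1 - α) * κ :=
    mul_nonneg (Real.Gamma_nonneg_of_nonneg (sub_nonneg.mpr hα1.le)) hκ.le
  refine tendsto_exp_mul_mul_atTop_of_one_div_one_add_rpow_le hC hα0.le hε ?_
  filter_upwards [eventually_ge_atTop 0] with t ht
  rw [mul_assoc]
  exact one_div_one_add_Gamma_mul_le_mittagLeffler_neg hα0 hα1 (by positivity)
end
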